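/- arXiv:2304.06853 — 6 statements merged into one kernel-verified Lean document; each statement's English description precedes it below -/
import Mathlib

section
/- Let Q be a finite state machine with 2^w states over the alphabet {0,1}^n, let b ≥ 2 and k ≥ 0 be integers, and let ε > 0. Suppose h₀, …, h_{k−1} are sampled so that all b·k component functions h_i^{(j)} : {0,1}^n → {0,1}^n are drawn independently, each uniformly from a fixed 2-wise independent family H. Then the probability that (h₀, …, h_{k−1}) is not ((b^k − 1)ε, Q)-good is at most 2^{3w}·k / ((b−1)²·ε²·2^n). -/
/-!
Fix the first `k` levels and regard `x ↦ G_k(x, h₀, …, h_{k-1})` as one symbol of a new machine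
`genStep` with one-symbol matrix `M = Q(G_k(*, h₀, …, h_{k-1}))`. Then `Q(G_{k+1}(*, h₀, …, h_k))`
is the average over `x` of the transition matrix of that machine on `h_k⁽⁰⁾(x), …, h_k⁽ᵇ⁻¹⁾(x)`
(`genStep_succ`). As `x` varies these `b`-tuples are pairwise independent and uniform
(`pair_count`), so each entry of this average has mean square deviation from `M ^ b` at
most `2⁻ⁿ` (`entry_variance`). Chebyshev's inequality, Cauchy–Schwarz along each row and a union
bound over the rows (`level_bad`) show that the average is within `(b - 1) ε` of `M ^ b`, except
with probability `2^{3w} / ((b - 1)² ε² 2ⁿ)`.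

Taking `b`-th powers of stochastic matrices multiplies distances by at most `b`
(`rowSum_pow_sub_pow_le`), and `Q((U_n)^L)` is the `L`-th power of the one-symbol matrix
(`QUnif_eq_pow`). Hence the errors satisfy `b (bᵏ - 1) ε + (b - 1) ε = (bᵏ⁺¹ - 1) ε`
(`good_succ`), while the failure probabilities of the levels add up (`bad_count`).
-/

open scoped BigOperators

/-- The maximum absolute row sum norm of a square real matrix:
`‖M‖ = max_i Σ_j |M i j|`. -/
noncomputable def rowSumNorm {ι : Type*} [Fintype ι] (M : Matrix ι ι ℝ) : ℝ :=
  ⨆ i, ∑ j, |M i j|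

/-- A finite family `H` of functions `{0,1}^n → {0,1}^n` is 2-wise independent if for `h`
drawn uniformly from `H` and any two distinct inputs `x₁ ≠ x₂`, the pair `(h x₁, h x₂)` is
uniformly distributed on `({0,1}^n)²`. -/
def TwoWiseIndep {n : ℕ} (H : Finset ((Fin n → Bool) → (Fin n → Bool))) : Prop :=
  ∀ x₁ x₂ : Fin n → Bool, x₁ ≠ x₂ → ∀ y₁ y₂ : Fin n → Bool,
    ((Nat.card {h : (Fin n → Bool) → (Fin n → Bool) //
        h ∈ H ∧ h x₁ = y₁ ∧ h x₂ = y₂} : ℝ) / H.card)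
      = (1 / 2 ^ n) * (1 / 2 ^ n)

/-- The generator `G_k`, defined recursively by `G_0(x) = x` and
`G_{k+1}(x, h₀, …, h_k) = G_k(h_k^{(0)}(x), h₀, …, h_{k-1}) ∘ ⋯ ∘ G_k(h_k^{(b-1)}(x), h₀, …, h_{k-1})`.
The output is viewed as a sequence of `b^k` blocks of `n` bits, the `j`-th block being
`Gk hb k h x j` (indices `j ≥ b^k` are junk, reduced mod `b^k`). -/
def Gk {n b : ℕ} (hb : 0 < b) : (k : ℕ) →
    (Fin k → Fin b → (Fin n → Bool) → (Fin n → Bool)) → (Fin n → Bool) → ℕ → Fin n → Bool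
  | 0, _, x, _ => x
  | k + 1, h, x, j =>
      Gk hb k (fun i => h i.castSucc)
        (h (Fin.last k) ⟨j / b ^ k % b, Nat.mod_lt _ hb⟩ x) (j % b ^ k)

/-- Run a finite state machine with transition function `δ` from state `s` on the
input string `l`. -/
def runFSM {S A : Type*} (δ : S → A → S) (s : S) (l : List A) : S :=
  l.foldl δ s

/-- The matrix `Q(G_k(*, h₀, …, h_{k−1}))`: entry `(i, j)` is the probability that the FSM
with transition function `δ`, started in state `i`, ends in state `j` after reading the
`b^k` blocks of `G_k(x, h₀, …, h_{k−1})` for `x` uniform in `{0,1}^n`. -/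
noncomputable def QGen {S : Type*} [Fintype S] {n b : ℕ} (hb : 0 < b) (k : ℕ)
    (δ : S → (Fin n → Bool) → S)
    (h : Fin k → Fin b → (Fin n → Bool) → (Fin n → Bool)) : Matrix S S ℝ :=
  fun i j =>
    (Nat.card {x : Fin n → Bool //
        runFSM δ i ((List.range (b ^ k)).map (Gk hb k h x)) = j} : ℝ) / 2 ^ n

/-- The matrix `Q((U_n)^L)`: entry `(i, j)` is the probability that the FSM started in
state `i` ends in state `j` after reading a uniformly random string of `L` symbols from
`{0,1}^n`. -/
noncomputable def QUnif {S : Type*} [Fintype S] {n : ℕ} (L : ℕ)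
    (δ : S → (Fin n → Bool) → S) : Matrix S S ℝ :=
  fun i j =>
    (Nat.card {g : Fin L → Fin n → Bool //
        runFSM δ i ((List.finRange L).map g) = j} : ℝ) / ((2 : ℝ) ^ n) ^ L

lemma natCard_eq_sum {α : Type*} [Fintype α] (p : α → Prop) [DecidablePred p] :
    (Nat.card {x // p x} : ℝ) = ∑ x, if p x then (1 : ℝ) else 0 := by
  rw [Nat.card_eq_fintype_card, Fintype.card_subtype, Finset.sum_boole]

/-- The one-symbol transition matrix of an FSM over the alphabet `{0,1}^n`. -/
noncomputable def stepMat {S : Type*} {n : ℕ} (δ : S → (Fin n → Bool) → S) : Matrix S S ℝ :=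
  fun i j => (Nat.card {x : Fin n → Bool // δ i x = j} : ℝ) / 2 ^ n

/-- The FSM that, on reading a seed `x`, runs `δ` on all `b ^ k` blocks of `G_k(x, h)`. -/
def genStep {S : Type*} {n b : ℕ} (hb : 0 < b) (k : ℕ) (δ : S → (Fin n → Bool) → S)
    (h : Fin k → Fin b → (Fin n → Bool) → (Fin n → Bool)) : S → (Fin n → Bool) → S :=
  fun s x => runFSM δ s ((List.range (b ^ k)).map (Gk hb k h x))

/-! ### Row sums -/

lemma rowSum_mul_le {S : Type*} [Fintype S] (A B : Matrix S S ℝ) {β : ℝ}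
    (hB : ∀ i, ∑ j, |B i j| ≤ β) (i : S) :
    ∑ j, |(A * B) i j| ≤ (∑ j, |A i j|) * β := by
  calc ∑ j, |(A * B) i j| ≤ ∑ j, ∑ l, |A i l| * |B l j| := by
        refine Finset.sum_le_sum fun j _ => ?_
        rw [Matrix.mul_apply]
        refine (Finset.abs_sum_le_sum_abs _ _).trans_eq ?_
        simp [abs_mul]
    _ = ∑ l, |A i l| * ∑ j, |B l j| := by
        rw [Finset.sum_comm]; simp [Finset.mul_sum]
    _ ≤ ∑ l, |A i l| * β :=
        Finset.sum_le_sum fun l _ => mul_le_mul_of_nonneg_left (hB l) (abs_nonneg _)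
    _ = _ := by rw [Finset.sum_mul]

lemma rowSum_pow_le_one {S : Type*} [Fintype S] [DecidableEq S] (A : Matrix S S ℝ)
    (hA : ∀ i, ∑ j, |A i j| ≤ 1) (m : ℕ) (i : S) : ∑ j, |(A ^ m) i j| ≤ 1 := by
  induction m generalizing i with
  | zero =>
    have h : ∀ j, |(1 : Matrix S S ℝ) i j| = if i = j then 1 else 0 := fun j => by
      rw [Matrix.one_apply]; split_ifs <;> simp
    simp [h]
  | succ m ih =>
    rw [pow_succ]
    refine (rowSum_mul_le _ _ hA i).trans ?_
    simpa using ih i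

/-- Taking `m`-th powers of row-substochastic matrices expands row-sum distance by at most `m`. -/
lemma rowSum_pow_sub_pow_le {S : Type*} [Fintype S] [DecidableEq S] (A B : Matrix S S ℝ)
    (hA : ∀ i, ∑ j, |A i j| ≤ 1) (hB : ∀ i, ∑ j, |B i j| ≤ 1) {c : ℝ} (hc : 0 ≤ c)
    (h : ∀ i, ∑ j, |(A - B) i j| ≤ c) (m : ℕ) (i : S) :
    ∑ j, |(A ^ m - B ^ m) i j| ≤ m * c := by
  induction m generalizing i with
  | zero => simp
  | succ m ih =>
    have e : A ^ (m + 1) - B ^ (m + 1) = A ^ m * (A - B) + (A ^ m - B ^ m) * B := by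
      rw [pow_succ, pow_succ]; noncomm_ring
    calc ∑ j, |(A ^ (m + 1) - B ^ (m + 1)) i j|
        ≤ ∑ j, |(A ^ m * (A - B)) i j| + ∑ j, |((A ^ m - B ^ m) * B) i j| := by
          rw [e, ← Finset.sum_add_distrib]
          exact Finset.sum_le_sum fun j _ => abs_add_le _ _
      _ ≤ (∑ j, |(A ^ m) i j|) * c + (∑ j, |(A ^ m - B ^ m) i j|) * 1 :=
          add_le_add (rowSum_mul_le _ _ h i) (rowSum_mul_le _ _ hB i)
      _ ≤ 1 * c + (m * c) * 1 :=
          add_le_add (mul_le_mul_of_nonneg_right (rowSum_pow_le_one A hA m i) hc)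
            (mul_le_mul_of_nonneg_right (ih i) zero_le_one)
      _ = _ := by push_cast; ring

lemma stepMat_rowSum {S : Type*} [Fintype S] {n : ℕ} (δ : S → (Fin n → Bool) → S) (i : S) :
    ∑ j, |stepMat δ i j| ≤ 1 := by
  classical
  have h : ∀ j, |stepMat δ i j| = (∑ x, if δ i x = j then (1 : ℝ) else 0) / 2 ^ n := fun j => by
    rw [abs_of_nonneg (by unfold stepMat; positivity), stepMat, natCard_eq_sum]
  simp_rw [h]
  rw [← Finset.sum_div, Finset.sum_comm]
  simp

/-! ### Transition matrices of strings -/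

/-- Reading `L` independent uniform symbols gives the `L`-th power of the one-symbol matrix. -/
lemma QUnif_eq_pow {S : Type*} [Fintype S] [DecidableEq S] {n : ℕ} (L : ℕ)
    (δ : S → (Fin n → Bool) → S) : QUnif L δ = stepMat δ ^ L := by
  induction L with
  | zero =>
    ext i j
    rw [QUnif, natCard_eq_sum]
    simp [runFSM, Matrix.one_apply]
  | succ L ih =>
    ext i j
    rw [pow_succ', ← ih, Matrix.mul_apply, QUnif, natCard_eq_sum,
      ← (Fin.consEquiv fun _ => (Fin n → Bool)).sum_comp, Fintype.sum_prod_type]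
    simp only [stepMat, QUnif, natCard_eq_sum]
    simp only [Fin.consEquiv, Equiv.coe_fn_mk, List.finRange_succ, List.map_cons, Fin.cons_zero,
      List.map_map, Function.comp_def, Fin.cons_succ, runFSM, List.foldl_cons]
    simp only [div_mul_div_comm, ← Finset.sum_div, ← pow_succ']
    congr 1
    simp only [Finset.sum_mul]
    rw [Finset.sum_comm (γ := S)]
    refine Finset.sum_congr rfl fun x _ => ?_
    rw [Finset.sum_eq_single (δ i x)]
    · simp only [if_true, one_mul]
      rfl
    · intro s _ hs
      simp [Ne.symm hs]
    · simp

lemma QGen_eq_stepMat {S : Type*} [Fintype S] {n b : ℕ} (hb : 0 < b) (k : ℕ)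
    (δ : S → (Fin n → Bool) → S) (h : Fin k → Fin b → (Fin n → Bool) → (Fin n → Bool)) :
    QGen hb k δ h = stepMat (genStep hb k δ h) := rfl

/-- Reading a concatenation of `b` pieces of length `m`. -/
lemma runFSM_range_mul {S A : Type*} (δ : S → A → S) (f : ℕ → A) (m b : ℕ) (s : S) :
    runFSM δ s ((List.range (m * b)).map f) =
      runFSM (fun t l => runFSM δ t ((List.range m).map fun j => f (m * l + j))) s
        (List.range b) := by
  induction b with
  | zero => simp [runFSM]
  | succ b ih =>
    rw [Nat.mul_succ, List.range_add, List.range_succ]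
    simp only [runFSM, List.map_append, List.foldl_append, List.map_map] at ih ⊢
    rw [ih]
    simp [Function.comp_def]

/-- The recursion of the generator: `G_{k+1}` is read by feeding the seeds `h_k^{(l)}(x)` to the
machine that reads `G_k`. -/
lemma genStep_succ {S : Type*} {n b : ℕ} (hb : 0 < b) (k : ℕ) (δ : S → (Fin n → Bool) → S)
    (h : Fin (k + 1) → Fin b → (Fin n → Bool) → (Fin n → Bool)) (s : S) (x : Fin n → Bool) :
    genStep hb (k + 1) δ h s x =
      runFSM (genStep hb k δ fun i => h i.castSucc) s
        ((List.finRange b).map fun l => h (Fin.last k) l x) := by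
  have hbk : 0 < b ^ k := pow_pos hb k
  rw [genStep, pow_succ, runFSM_range_mul, ← List.map_coe_finRange_eq_range (n := b)]
  simp only [runFSM, List.foldl_map]
  refine List.foldl_ext _ _ _ fun t l _ => ?_
  rw [genStep, runFSM, List.foldl_map]
  refine List.foldl_ext _ _ _ fun u j hj => ?_
  have hj' : j < b ^ k := List.mem_range.1 hj
  have h1 : (b ^ k * l + j) / b ^ k % b = l := by
    rw [Nat.mul_add_div hbk, Nat.div_eq_of_lt hj', add_zero, Nat.mod_eq_of_lt l.2]
  have h2 : (b ^ k * l + j) % b ^ k = j := by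
    rw [Nat.mul_add_mod, Nat.mod_eq_of_lt hj']
  simp only [Gk, h1, h2]

/-! ### The second moment bound -/

/-- If for `x ≠ x'` the pair `(X x, X x')` takes every value in `B × B` equally often (`c` times
each), then a sum of centred
observables bounded by `1` has second moment at most the number of terms. -/
lemma second_moment {A B Ω : Type*} [Fintype A] [Fintype B] [Fintype Ω] (X : A → Ω → B) (c : ℝ)
    (hX : ∀ x x', x ≠ x' → ∀ y y', (Nat.card {ω // X x ω = y ∧ X x' ω = y'} : ℝ) = c)
    (ψ : B → ℝ) (h1 : ∀ y, |ψ y| ≤ 1) (h0 : ∑ y, ψ y = 0) :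
    ∑ ω, (∑ x, ψ (X x ω)) ^ 2 ≤ Fintype.card Ω * Fintype.card A := by
  classical
  have key : ∀ x x', ∑ ω, ψ (X x ω) * ψ (X x' ω) ≤ if x = x' then (Fintype.card Ω : ℝ) else 0 := by
    intro x x'
    split_ifs with hx
    · subst hx
      calc ∑ ω, ψ (X x ω) * ψ (X x ω) ≤ ∑ _ω : Ω, (1 : ℝ) := by
            refine Finset.sum_le_sum fun ω _ => ?_
            have := h1 (X x ω)
            rw [← abs_mul_abs_self]
            nlinarith [abs_nonneg (ψ (X x ω))]
        _ = _ := by simp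
    · apply le_of_eq
      calc ∑ ω, ψ (X x ω) * ψ (X x' ω)
          = ∑ ω, ∑ y, ∑ y', (if X x ω = y ∧ X x' ω = y' then 1 else 0) * (ψ y * ψ y') := by
            refine Finset.sum_congr rfl fun ω _ => ?_
            simp [ite_and]
        _ = ∑ y, ∑ y', c * (ψ y * ψ y') := by
            rw [Finset.sum_comm]
            refine Finset.sum_congr rfl fun y _ => ?_
            rw [Finset.sum_comm]
            refine Finset.sum_congr rfl fun y' _ => ?_
            rw [← Finset.sum_mul, ← hX x x' hx y y', natCard_eq_sum]
        _ = 0 := by simp [← Finset.mul_sum, h0]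
  calc ∑ ω, (∑ x, ψ (X x ω)) ^ 2 = ∑ x, ∑ x', ∑ ω, ψ (X x ω) * ψ (X x' ω) := by
        simp_rw [sq, Finset.sum_mul_sum]
        rw [Finset.sum_comm]
        exact Finset.sum_congr rfl fun x _ => Finset.sum_comm
    _ ≤ ∑ x, ∑ x', if x = x' then (Fintype.card Ω : ℝ) else 0 :=
        Finset.sum_le_sum fun x _ => Finset.sum_le_sum fun x' _ => key x x'
    _ = _ := by simp [mul_comm]

/-- The machine that reads `h⁽⁰⁾(x), …, h⁽ᵇ⁻¹⁾(x)` on input `x`. -/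
def levelStep {S : Type*} {n b : ℕ} {H : Finset ((Fin n → Bool) → (Fin n → Bool))}
    (δ : S → (Fin n → Bool) → S) (h : Fin b → {f // f ∈ H}) : S → (Fin n → Bool) → S :=
  fun s x => runFSM δ s ((List.finRange b).map fun l => (h l).1 x)

/-- Independent copies of a 2-wise independent family form a 2-wise independent family with
values in `b`-tuples. -/
lemma pair_count {n b : ℕ} {H : Finset ((Fin n → Bool) → (Fin n → Bool))} (hH : H.Nonempty)
    (hind : TwoWiseIndep H) (x x' : Fin n → Bool) (hx : x ≠ x') (y y' : Fin b → Fin n → Bool) :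
    (Nat.card {h : Fin b → {f // f ∈ H} //
      (fun l => (h l).1 x) = y ∧ (fun l => (h l).1 x') = y'} : ℝ) =
      (H.card * ((1 / 2 ^ n) * (1 / 2 ^ n))) ^ b := by
  have hH0 : (H.card : ℝ) ≠ 0 := by exact_mod_cast hH.card_pos.ne'
  have e : {h : Fin b → {f // f ∈ H} //
      (fun l => (h l).1 x) = y ∧ (fun l => (h l).1 x') = y'} ≃
      ((l : Fin b) → {f : (Fin n → Bool) → (Fin n → Bool) // f ∈ H ∧ f x = y l ∧ f x' = y' l}) :=
    { toFun := fun h l => ⟨(h.1 l).1, (h.1 l).2, congrFun h.2.1 l, congrFun h.2.2 l⟩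
      invFun := fun g => ⟨fun l => ⟨(g l).1, (g l).2.1⟩,
        funext fun l => (g l).2.2.1, funext fun l => (g l).2.2.2⟩
      left_inv := fun _ => rfl
      right_inv := fun _ => rfl }
  rw [Nat.card_congr e, Nat.card_pi, Nat.cast_prod]
  have : ∀ l, (Nat.card {f : (Fin n → Bool) → (Fin n → Bool) //
      f ∈ H ∧ f x = y l ∧ f x' = y' l} : ℝ) = H.card * ((1 / 2 ^ n) * (1 / 2 ^ n)) := fun l => by
    rw [← hind x x' hx (y l) (y' l), mul_div_cancel₀ _ hH0]
  rw [Finset.prod_congr rfl fun l _ => this l]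
  simp

/-- Over random `h`, each entry of the transition matrix of `levelStep δ h` has mean square
deviation at most `2⁻ⁿ` from the corresponding entry of `stepMat δ ^ b`. -/
lemma entry_variance {S : Type*} [Fintype S] [DecidableEq S] {n b : ℕ}
    {H : Finset ((Fin n → Bool) → (Fin n → Bool))} (hH : H.Nonempty) (hind : TwoWiseIndep H)
    (δ : S → (Fin n → Bool) → S) (i j : S) :
    ∑ h : Fin b → {f // f ∈ H}, ((stepMat (levelStep δ h) - stepMat δ ^ b) i j) ^ 2 ≤
      Fintype.card (Fin b → {f // f ∈ H}) / 2 ^ n := by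
  set p : ℝ := (stepMat δ ^ b) i j with hp
  set φ : (Fin b → Fin n → Bool) → ℝ :=
    fun y => if runFSM δ i ((List.finRange b).map y) = j then 1 else 0 with hφ
  have hN : (0 : ℝ) < 2 ^ n := by positivity
  have hsum : ∑ y, φ y = ((2 : ℝ) ^ n) ^ b * p := by
    rw [hp, ← QUnif_eq_pow, QUnif, natCard_eq_sum, mul_div_cancel₀ _ (by positivity)]
  have hφ0 : ∀ y, 0 ≤ φ y := fun y => by simp only [hφ]; split_ifs <;> norm_num
  have hφ1 : ∀ y, φ y ≤ 1 := fun y => by simp only [hφ]; split_ifs <;> norm_num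
  have hNb : (0 : ℝ) < ((2 : ℝ) ^ n) ^ b := by positivity
  have hp0 : 0 ≤ p := by
    have := Finset.sum_nonneg fun y (_ : y ∈ Finset.univ) => hφ0 y
    rw [hsum] at this
    exact nonneg_of_mul_nonneg_right this hNb
  have hp1 : p ≤ 1 := by
    have := Finset.sum_le_sum fun y (_ : y ∈ Finset.univ) => hφ1 y
    rw [hsum] at this
    simp at this
    nlinarith
  have hm := second_moment (fun (x : Fin n → Bool) (h : Fin b → {f // f ∈ H}) l => (h l).1 x) _
    (pair_count hH hind) (fun y => φ y - p)
    (fun y => abs_le.2 ⟨by linarith [hφ0 y], by linarith [hφ1 y]⟩)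
    (by rw [Finset.sum_sub_distrib, hsum]; simp)
  have hE : ∀ h : Fin b → {f // f ∈ H}, (stepMat (levelStep δ h) - stepMat δ ^ b) i j =
      (∑ x, (φ (fun l => (h l).1 x) - p)) / 2 ^ n := fun h => by
    rw [Matrix.sub_apply, stepMat, natCard_eq_sum, Finset.sum_sub_distrib, sub_div]
    congr 1
    simp [hp]
  simp_rw [hE, div_pow]
  rw [← Finset.sum_div, div_le_div_iff₀ (by positivity) hN]
  have hA : (Fintype.card (Fin n → Bool) : ℝ) = 2 ^ n := by simp
  rw [hA] at hm
  nlinarith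

/-- Chebyshev at one level of the generator. One factor `|S|` comes from Cauchy–Schwarz along a
row, one from summing the entries of a row, and one from the union bound over rows. -/
lemma level_bad {S : Type*} [Fintype S] [DecidableEq S] {n b : ℕ}
    {H : Finset ((Fin n → Bool) → (Fin n → Bool))} (hH : H.Nonempty) (hind : TwoWiseIndep H)
    (δ : S → (Fin n → Bool) → S) {t : ℝ} (ht : 0 < t) :
    (Nat.card {h : Fin b → {f // f ∈ H} //
      ¬ ∀ i, ∑ j, |(stepMat (levelStep δ h) - stepMat δ ^ b) i j| ≤ t} : ℝ) ≤
      Fintype.card (Fin b → {f // f ∈ H}) * ((Fintype.card S : ℝ) ^ 3 / (t ^ 2 * 2 ^ n)) := by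
  classical
  rw [natCard_eq_sum]
  have h1 : ∀ h : Fin b → {f // f ∈ H},
      (if ¬ ∀ i, ∑ j, |(stepMat (levelStep δ h) - stepMat δ ^ b) i j| ≤ t then (1 : ℝ) else 0) ≤
      ∑ i, ∑ j, Fintype.card S * ((stepMat (levelStep δ h) - stepMat δ ^ b) i j) ^ 2 / t ^ 2 := by
    intro h
    set D := stepMat (levelStep δ h) - stepMat δ ^ b
    split_ifs with hbad
    · exact Finset.sum_nonneg fun i _ => Finset.sum_nonneg fun j _ => by positivity
    · push Not at hbad
      obtain ⟨i, hi⟩ := hbad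
      refine le_trans ?_ (Finset.single_le_sum
        (f := fun i => ∑ j, Fintype.card S * (D i j) ^ 2 / t ^ 2)
        (fun i _ => Finset.sum_nonneg fun j _ => by positivity) (Finset.mem_univ i))
      rw [← Finset.sum_div, ← Finset.mul_sum, le_div_iff₀ (by positivity), one_mul]
      have hcs := sq_sum_le_card_mul_sum_sq (s := Finset.univ) (f := fun j => |D i j|)
      simp only [sq_abs, Finset.card_univ] at hcs
      nlinarith
  calc _ ≤ ∑ h : Fin b → {f // f ∈ H}, ∑ i, ∑ j,
          Fintype.card S * ((stepMat (levelStep δ h) - stepMat δ ^ b) i j) ^ 2 / t ^ 2 :=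
        Finset.sum_le_sum fun h _ => h1 h
    _ = ∑ i, ∑ j, Fintype.card S * (∑ h : Fin b → {f // f ∈ H},
          ((stepMat (levelStep δ h) - stepMat δ ^ b) i j) ^ 2) / t ^ 2 := by
        rw [Finset.sum_comm]
        refine Finset.sum_congr rfl fun i _ => ?_
        rw [Finset.sum_comm]
        simp_rw [Finset.mul_sum, Finset.sum_div]
    _ ≤ ∑ _i : S, ∑ _j : S, Fintype.card S *
          ((Fintype.card (Fin b → {f // f ∈ H}) : ℝ) / 2 ^ n) / t ^ 2 := by
        refine Finset.sum_le_sum fun i _ => Finset.sum_le_sum fun j _ => ?_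
        have := entry_variance (b := b) hH hind δ i j
        gcongr
    _ = _ := by
        simp only [Finset.sum_const, Finset.card_univ, nsmul_eq_mul]
        field_simp

/-! ### Induction on the number of levels -/

/-- If the first `k` levels are good and level `k` is good for the machine they define, then all
`k + 1` levels are good; the errors combine as `b (bᵏ - 1) + (b - 1) = bᵏ⁺¹ - 1`. -/
lemma good_succ {S : Type*} [Fintype S] [DecidableEq S] {n b k : ℕ} (hb : 0 < b)
    (δ : S → (Fin n → Bool) → S) {H : Finset ((Fin n → Bool) → (Fin n → Bool))} {ε : ℝ}
    (hε : 0 < ε) (ω : Fin k → Fin b → {f // f ∈ H}) (h : Fin b → {f // f ∈ H})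
    (hω : ∀ i, ∑ j, |(QGen hb k δ (fun i j => (ω i j).1) - QUnif (b ^ k) δ) i j|
      ≤ ((b : ℝ) ^ k - 1) * ε)
    (hh : ∀ i, ∑ j, |(stepMat (levelStep (genStep hb k δ fun i j => (ω i j).1) h)
      - stepMat (genStep hb k δ fun i j => (ω i j).1) ^ b) i j| ≤ ((b : ℝ) - 1) * ε) (i : S) :
    ∑ j, |(QGen hb (k + 1) δ (fun i j => (Fin.snoc (α := fun _ => Fin b → {f // f ∈ H}) ω h i j).1)
      - QUnif (b ^ (k + 1)) δ) i j| ≤ ((b : ℝ) ^ (k + 1) - 1) * ε := by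
  have hb1 : (1 : ℝ) ≤ b := by exact_mod_cast hb
  have e1 : QGen hb (k + 1) δ
      (fun i j => (Fin.snoc (α := fun _ => Fin b → {f // f ∈ H}) ω h i j).1) =
      stepMat (levelStep (genStep hb k δ fun i j => (ω i j).1) h) := by
    rw [QGen_eq_stepMat]
    congr 1
    funext s x
    rw [genStep_succ]
    simp [levelStep]
  have e2 : QUnif (b ^ (k + 1)) δ = QUnif (b ^ k) δ ^ b := by
    rw [QUnif_eq_pow, QUnif_eq_pow, ← pow_mul, pow_succ]
  rw [e1, e2]
  rw [QGen_eq_stepMat] at hω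
  set M := stepMat (genStep hb k δ fun i j => (ω i j).1)
  have hU : ∀ i, ∑ j, |QUnif (b ^ k) δ i j| ≤ 1 := by
    rw [QUnif_eq_pow]
    exact rowSum_pow_le_one _ (stepMat_rowSum δ) _
  have hc : 0 ≤ ((b : ℝ) ^ k - 1) * ε := mul_nonneg (sub_nonneg.2 (one_le_pow₀ hb1)) hε.le
  have hpow := rowSum_pow_sub_pow_le M _ (stepMat_rowSum _) hU hc hω b i
  calc _ ≤ ∑ j, (|(stepMat (levelStep (genStep hb k δ fun i j => (ω i j).1) h) - M ^ b) i j|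
          + |(M ^ b - QUnif (b ^ k) δ ^ b) i j|) := by
        refine Finset.sum_le_sum fun j _ => ?_
        simp only [Matrix.sub_apply]
        exact abs_sub_le _ _ _
    _ ≤ ((b : ℝ) - 1) * ε + b * (((b : ℝ) ^ k - 1) * ε) := by
        rw [Finset.sum_add_distrib]
        exact add_le_add (hh i) hpow
    _ = _ := by ring

lemma bad_count {S : Type*} [Fintype S] [DecidableEq S] {n b : ℕ} (hb : 2 ≤ b) (hb0 : 0 < b)
    (δ : S → (Fin n → Bool) → S) {H : Finset ((Fin n → Bool) → (Fin n → Bool))}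
    (hH : H.Nonempty) (hind : TwoWiseIndep H) {ε : ℝ} (hε : 0 < ε) (k : ℕ) :
    (Nat.card {ω : Fin k → Fin b → {f // f ∈ H} //
      ¬ ∀ i, ∑ j, |(QGen hb0 k δ (fun i j => (ω i j).1) - QUnif (b ^ k) δ) i j|
        ≤ ((b : ℝ) ^ k - 1) * ε} : ℝ) ≤
      (Fintype.card (Fin b → {f // f ∈ H}) : ℝ) ^ k *
        (k * ((Fintype.card S : ℝ) ^ 3 / ((((b : ℝ) - 1) * ε) ^ 2 * 2 ^ n))) := by
  classical
  have hb' : (2 : ℝ) ≤ b := by exact_mod_cast hb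
  have ht : 0 < ((b : ℝ) - 1) * ε := mul_pos (by linarith) hε
  set q : ℝ := (Fintype.card S : ℝ) ^ 3 / ((((b : ℝ) - 1) * ε) ^ 2 * 2 ^ n) with hq
  set W : ℝ := (Fintype.card (Fin b → {f // f ∈ H}) : ℝ) with hW
  have hW0 : 0 ≤ W := Nat.cast_nonneg _
  induction k with
  | zero =>
    have h0 : ∀ ω : Fin 0 → Fin b → {f // f ∈ H},
        QGen hb0 0 δ (fun i j => (ω i j).1) = QUnif (b ^ 0) δ := fun ω => by
      rw [QUnif_eq_pow, pow_zero, pow_one, QGen_eq_stepMat]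
      rfl
    simp [h0]
  | succ k ih =>
    rw [natCard_eq_sum] at ih ⊢
    rw [← (Fin.snocEquiv fun _ => (Fin b → {f // f ∈ H})).sum_comp, Fintype.sum_prod_type,
      Finset.sum_comm]
    have hl := fun ω : Fin k → Fin b → {f // f ∈ H} =>
      level_bad (b := b) hH hind (genStep hb0 k δ fun i j => (ω i j).1) ht
    simp only [natCard_eq_sum] at hl
    have hstep : ∀ (ω : Fin k → Fin b → {f // f ∈ H}) (h : Fin b → {f // f ∈ H}),
        (if ¬ ∀ i, ∑ j, |(QGen hb0 (k + 1) δ (fun i j =>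
            (Fin.snocEquiv (fun _ => (Fin b → {f // f ∈ H})) (h, ω) i j).1)
            - QUnif (b ^ (k + 1)) δ) i j| ≤ ((b : ℝ) ^ (k + 1) - 1) * ε then (1 : ℝ) else 0) ≤
          (if ¬ ∀ i, ∑ j, |(QGen hb0 k δ (fun i j => (ω i j).1) - QUnif (b ^ k) δ) i j|
            ≤ ((b : ℝ) ^ k - 1) * ε then (1 : ℝ) else 0) +
          (if ¬ ∀ i, ∑ j, |(stepMat (levelStep (genStep hb0 k δ fun i j => (ω i j).1) h)
            - stepMat (genStep hb0 k δ fun i j => (ω i j).1) ^ b) i j| ≤ ((b : ℝ) - 1) * ε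
            then (1 : ℝ) else 0) := by
      intro ω h
      by_cases h1 : ∀ i, ∑ j, |(QGen hb0 k δ (fun i j => (ω i j).1) - QUnif (b ^ k) δ) i j|
            ≤ ((b : ℝ) ^ k - 1) * ε
      · by_cases h2 : ∀ i, ∑ j, |(stepMat (levelStep (genStep hb0 k δ fun i j => (ω i j).1) h)
            - stepMat (genStep hb0 k δ fun i j => (ω i j).1) ^ b) i j| ≤ ((b : ℝ) - 1) * ε
        · rw [if_neg (not_not.2 h1), if_neg (not_not.2 h2), if_neg]
          · norm_num
          · exact not_not.2 (good_succ hb0 δ hε ω h h1 h2)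
        · rw [if_neg (not_not.2 h1), if_pos h2, zero_add]
          split_ifs <;> norm_num
      · rw [if_pos h1]
        split_ifs <;> norm_num
    refine (Finset.sum_le_sum fun ω _ => Finset.sum_le_sum fun h _ => hstep ω h).trans ?_
    simp only [Finset.sum_add_distrib, Finset.sum_const, Finset.card_univ, nsmul_eq_mul]
    rw [← Finset.mul_sum]
    calc _ ≤ W * (W ^ k * (k * q)) + ∑ _ω : Fin k → Fin b → {f // f ∈ H}, W * q :=
          add_le_add (mul_le_mul_of_nonneg_left ih hW0)
            (Finset.sum_le_sum fun ω _ => hl ω)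
      _ = W * (W ^ k * (k * q)) + W ^ k * (W * q) := by
          rw [Finset.sum_const, Finset.card_univ, nsmul_eq_mul, hW, Fintype.card_fun (α := Fin k)]
          simp
      _ = _ := by push_cast; ring

/-- Let `Q` be an FSM with `2^w` states over the alphabet `{0,1}^n`, let `b ≥ 2`, `k ≥ 0`
and `ε > 0`.  If the `b·k` component functions `h_i^{(j)}` are drawn independently, each
uniformly from a fixed 2-wise independent family `H` (equivalently, the tuple
`ω : Fin k → Fin b → H` is uniform), then the probability that `(h₀, …, h_{k−1})` is not
`((b^k − 1)ε, Q)`-good is at most `2^{3w}·k / ((b−1)²·ε²·2^n)`. -/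
theorem prob_not_good_le {S : Type*} [Fintype S] {n w b k : ℕ}
    (hb : 2 ≤ b) (hb0 : 0 < b) (hS : Fintype.card S = 2 ^ w)
    (δ : S → (Fin n → Bool) → S)
    (H : Finset ((Fin n → Bool) → (Fin n → Bool))) (hH : H.Nonempty)
    (hind : TwoWiseIndep H) (ε : ℝ) (hε : 0 < ε) :
    ((Nat.card {ω : Fin k → Fin b → {f // f ∈ H} //
        ¬ rowSumNorm
            (QGen hb0 k δ (fun i j => (ω i j).1) - QUnif (b ^ k) δ)
              ≤ ((b : ℝ) ^ k - 1) * ε} : ℝ)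
        / (Fintype.card (Fin k → Fin b → {f // f ∈ H}) : ℝ))
      ≤ 2 ^ (3 * w) * k / (((b : ℝ) - 1) ^ 2 * ε ^ 2 * 2 ^ n) := by
  classical
  have hb' : (2 : ℝ) ≤ b := by exact_mod_cast hb
  have hW : (0 : ℝ) < Fintype.card (Fin k → Fin b → {f // f ∈ H}) := by
    have : Nonempty {f // f ∈ H} := hH.to_subtype
    exact_mod_cast Fintype.card_pos
  have hWk : (Fintype.card (Fin k → Fin b → {f // f ∈ H}) : ℝ) =
      (Fintype.card (Fin b → {f // f ∈ H}) : ℝ) ^ k := by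
    rw [Fintype.card_fun (α := Fin k)]
    simp
  have hc : 0 ≤ ((b : ℝ) ^ k - 1) * ε :=
    mul_nonneg (sub_nonneg.2 (one_le_pow₀ (by linarith))) hε.le
  have hmain := bad_count hb hb0 δ hH hind hε k
  rw [← hWk] at hmain
  have hS' : (Fintype.card S : ℝ) ^ 3 = 2 ^ (3 * w) := by
    rw [hS, mul_comm 3 w, pow_mul]
    push_cast
    rfl
  rw [div_le_iff₀ hW]
  refine le_trans ?_ (hmain.trans_eq ?_)
  · refine Nat.cast_le.2 (Nat.card_le_card_of_injective
      (Subtype.map id fun ω hω hgood => hω (Real.iSup_le hgood hc))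
      (Subtype.map_injective _ Function.injective_id))
  · rw [hS', mul_pow]
    ring
end

section
/- Let x ∈ ℝ^d be a fixed vector and let L be the random sketch map defined from h and s. Then for every i ∈ [t], E[ (Lx)_i² ] = ‖x‖₂²/t. -/
/-!
Expanding the square writes `(Lx)_i²` as the sum over `j, k` of
`1[h j = i] 1[h k = i] · s_j s_k · x_j x_k`. Since `h` and `s` are independent, each expectation
splits into a factor depending on `h` and the factor `E[s_j s_k]`. The latter vanishes for `j ≠ k`
(`integral_sign_mul_sign`) because two distinct signs are jointly uniform, and `s_j² = 1`; so only
the diagonal survives, where `P(h j = i) = 1/t`.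
-/

open MeasureTheory ProbabilityTheory
open scoped ENNReal BigOperators

/-- `h : [d] → [t]` is a pairwise independent uniform random function: for every set of at
most two indices, the corresponding values are independent and uniform on `[t]`. -/
def PairwiseUniform {Ω : Type*} [MeasurableSpace Ω] (μ : Measure Ω) {d t : ℕ}
    (h : Ω → Fin d → Fin t) : Prop :=
  ∀ J : Finset (Fin d), J.card ≤ 2 → ∀ a : Fin d → Fin t,
    μ {ω | ∀ j ∈ J, h ω j = a j} = ((t : ℝ≥0∞))⁻¹ ^ J.card

/-- `s : [d] → {−1, +1}` is a 4-wise independent random sign function: it takes values in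
`{−1, +1}`, and for every set of at most four indices the corresponding values are
independent and uniform on `{−1, +1}`. -/
def FourWiseSigns {Ω : Type*} [MeasurableSpace Ω] (μ : Measure Ω) {d : ℕ}
    (s : Ω → Fin d → ℝ) : Prop :=
  (∀ ω j, s ω j = 1 ∨ s ω j = -1) ∧
  ∀ J : Finset (Fin d), J.card ≤ 4 → ∀ e : Fin d → ℝ, (∀ j, e j = 1 ∨ e j = -1) →
    μ {ω | ∀ j ∈ J, s ω j = e j} = (2 : ℝ≥0∞)⁻¹ ^ J.card

/-- The sketch map: `(Lx)_i = Σ_{j : h(j) = i} s(j)·x_j`. -/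
noncomputable def sketch {d t : ℕ} (h : Fin d → Fin t) (s : Fin d → ℝ)
    (x : Fin d → ℝ) (i : Fin t) : ℝ :=
  ∑ j, if h j = i then s j * x j else 0

/-- Distinct signs are uncorrelated: `s_j s_k` is `±1` on four events of probability `1/4`
each, with the two values equally represented. -/
lemma integral_sign_mul_sign {Ω : Type*} [MeasurableSpace Ω] (μ : Measure Ω)
    [IsProbabilityMeasure μ] {d : ℕ} (s : Ω → Fin d → ℝ) (hms : Measurable s)
    (hfs : FourWiseSigns μ s) {j k : Fin d} (hjk : j ≠ k) :
    ∫ ω, s ω j * s ω k ∂μ = 0 := by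
  obtain ⟨hs, hu⟩ := hfs
  have hmj : ∀ j, Measurable fun ω => s ω j := fun j => (measurable_pi_apply j).comp hms
  have hmeas : ∀ e f : ℝ, MeasurableSet {ω | s ω j = e ∧ s ω k = f} := fun e f =>
    (hmj j (measurableSet_singleton e)).inter (hmj k (measurableSet_singleton f))
  have hprob : ∀ e f : ℝ, (e = 1 ∨ e = -1) → (f = 1 ∨ f = -1) →
      μ.real {ω | s ω j = e ∧ s ω k = f} = 1 / 4 := by
    intro e f he hf
    have h1 := hu {j, k} (by rw [Finset.card_pair hjk]; norm_num)
      (fun l => if l = j then e else f) (by intro l; split_ifs <;> assumption)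
    rw [Finset.card_pair hjk] at h1
    have h2 : {ω | ∀ l ∈ ({j, k} : Finset (Fin d)), s ω l = if l = j then e else f}
        = {ω | s ω j = e ∧ s ω k = f} := by
      ext ω
      simp [hjk.symm]
    rw [h2] at h1
    rw [Measure.real, h1]
    norm_num
  have hint : ∀ e f : ℝ,
      Integrable (fun ω => {ω | s ω j = e ∧ s ω k = f}.indicator (fun _ => (1 : ℝ)) ω) μ :=
    fun e f => (integrable_const _).indicator (hmeas e f)
  have hI : ∀ e f : ℝ, (e = 1 ∨ e = -1) → (f = 1 ∨ f = -1) →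
      ∫ ω, {ω | s ω j = e ∧ s ω k = f}.indicator (fun _ => (1 : ℝ)) ω ∂μ = 1 / 4 := by
    intro e f he hf
    rw [integral_indicator_const _ (hmeas e f), hprob e f he hf]
    simp
  have hpt : ∀ ω, s ω j * s ω k =
      ({ω | s ω j = 1 ∧ s ω k = 1}.indicator (fun _ => (1 : ℝ)) ω
        + {ω | s ω j = -1 ∧ s ω k = -1}.indicator (fun _ => (1 : ℝ)) ω)
      - ({ω | s ω j = 1 ∧ s ω k = -1}.indicator (fun _ => (1 : ℝ)) ω
        + {ω | s ω j = -1 ∧ s ω k = 1}.indicator (fun _ => (1 : ℝ)) ω) := by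
    intro ω
    rcases hs ω j with h1 | h1 <;> rcases hs ω k with h2 | h2 <;>
      simp only [Set.indicator, Set.mem_ofPred_eq, h1, h2] <;> norm_num
  simp_rw [hpt]
  rw [integral_sub ((hint _ _).fun_add (hint _ _)) ((hint _ _).fun_add (hint _ _)),
    integral_add (hint _ _) (hint _ _), integral_add (hint _ _) (hint _ _),
    hI _ _ (by simp) (by simp), hI _ _ (by simp) (by simp), hI _ _ (by simp) (by simp),
    hI _ _ (by simp) (by simp)]
  norm_num

/-- For a fixed `x ∈ ℝ^d` and the random sketch map `L` defined from `h` and `s`: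
`E[(Lx)_i²] = ‖x‖₂²/t` for every `i ∈ [t]`. -/
theorem sketch_second_moment {Ω : Type*} [MeasurableSpace Ω] (μ : Measure Ω)
    [IsProbabilityMeasure μ] {d t : ℕ} (hd : 0 < d) (ht : 0 < t)
    (h : Ω → Fin d → Fin t) (s : Ω → Fin d → ℝ)
    (hmh : Measurable h) (hms : Measurable s)
    (hph : PairwiseUniform μ h) (hfs : FourWiseSigns μ s)
    (hhs : IndepFun h s μ)
    (x : Fin d → ℝ) (i : Fin t) :
    ∫ ω, (sketch (h ω) (s ω) x i) ^ 2 ∂μ = (∑ j, x j ^ 2) / t := by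
  have hs := hfs.1
  have hmhj : ∀ j, Measurable fun ω => h ω j := fun j => (measurable_pi_apply j).comp hmh
  let u : Fin d → Fin d → (Fin d → Fin t) → ℝ := fun j k g =>
    (if g j = i then 1 else 0) * (if g k = i then 1 else 0)
  let v : Fin d → Fin d → (Fin d → ℝ) → ℝ := fun j k r => r j * r k
  have hu : ∀ j k, Measurable (u j k) := fun j k => measurable_of_countable _
  have hv : ∀ j k, Measurable (v j k) := fun j k =>
    (measurable_pi_apply j).mul (measurable_pi_apply k)
  have hexp : ∀ ω, (sketch (h ω) (s ω) x i) ^ 2 =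
      ∑ j, ∑ k, (x j * x k) * (u j k (h ω) * v j k (s ω)) := by
    intro ω
    rw [sketch, sq, Finset.sum_mul_sum]
    refine Finset.sum_congr rfl fun j _ => Finset.sum_congr rfl fun k _ => ?_
    simp only [u, v]
    split_ifs <;> ring
  have hint : ∀ j k, Integrable (fun ω => (x j * x k) * (u j k (h ω) * v j k (s ω))) μ := by
    intro j k
    refine Integrable.const_mul ?_ _
    refine Integrable.of_bound
      (((hu j k).comp hmh).mul ((hv j k).comp hms)).aestronglyMeasurable 1 ?_
    refine Filter.Eventually.of_forall fun ω => ?_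
    simp only [u, v]
    rcases hs ω j with h1 | h1 <;> rcases hs ω k with h2 | h2 <;> rw [h1, h2] <;>
      split_ifs <;> norm_num
  have hfac : ∀ j k, ∫ ω, u j k (h ω) * v j k (s ω) ∂μ
      = (∫ ω, u j k (h ω) ∂μ) * ∫ ω, v j k (s ω) ∂μ := fun j k =>
    (hhs.comp (hu j k) (hv j k)).integral_fun_mul_eq_mul_integral
      ((hu j k).comp hmh).aestronglyMeasurable ((hv j k).comp hms).aestronglyMeasurable
  have hdiag : ∀ j, ∫ ω, u j j (h ω) ∂μ = (t : ℝ)⁻¹ := by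
    intro j
    have h1 := hph {j} (by simp) (fun _ => i)
    simp only [Finset.mem_singleton, forall_eq, Finset.card_singleton, pow_one] at h1
    have h2 : (fun ω => u j j (h ω)) = {ω | h ω j = i}.indicator (fun _ => (1 : ℝ)) := by
      ext ω
      simp [u, Set.indicator]
    have h3 : MeasurableSet {ω | h ω j = i} := hmhj j (measurableSet_singleton i)
    rw [h2, integral_indicator_const _ h3, Measure.real, h1]
    simp
  have hoff : ∀ j k, j ≠ k → ∫ ω, v j k (s ω) ∂μ = 0 := fun j k hjk =>
    integral_sign_mul_sign μ s hms hfs hjk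
  have hone : ∀ j, ∫ ω, v j j (s ω) ∂μ = 1 := by
    intro j
    have : (fun ω => v j j (s ω)) = fun _ => (1 : ℝ) := by
      ext ω
      rcases hs ω j with h1 | h1 <;> simp [v, h1]
    rw [this]
    simp
  simp_rw [hexp]
  rw [integral_finsetSum _ fun j _ => integrable_finsetSum _ fun k _ => hint j k, Finset.sum_div]
  refine Finset.sum_congr rfl fun j _ => ?_
  rw [integral_finsetSum _ fun k _ => hint j k, Finset.sum_eq_single j]
  · rw [integral_const_mul, hfac, hdiag, hone]
    ring
  · intro k _ hk
    rw [integral_const_mul, hfac, hoff j k hk.symm]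
    simp
  · simp
end

section
/- Let x ∈ ℝ^d be a fixed vector and let L be the random sketch map defined from h and s. Then for every i ∈ [t], E[ (Lx)_i⁴ ] = ‖x‖₄⁴/t + (3/t²)·(‖x‖₂⁴ − ‖x‖₄⁴). -/
/-!
Expanding the fourth power and using independence of `h` and `s`, the expectation is
`∑_{a,b,c,e} x_a x_b x_c x_e · E[I_a I_b I_c I_e] · E[s_a s_b s_c s_e]`, where `I_j` is the
indicator of `h j = i`. The sign moment is `1` if the four indices pair up and `0` otherwise
(`integral_sign_four`); this rests on the vanishing of `E[∏_{j ∈ J} s_j]` for nonempty `J` with at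
most four elements (`integral_sign_prod`). For paired indices, the hash moment involves at most
two distinct indices, so it is `1/t` or `1/t²` (`integral_hash_two`). There are three pairings, and
the diagonal `a = b = c = e` belongs to all of them, so inclusion–exclusion subtracts it twice.
-/

open MeasureTheory ProbabilityTheory
open scoped ENNReal BigOperators

/-- Writing `s_j = 2·1[s_j = 1] − 1` and expanding the product over subsets `K ⊆ J`, the factor
`2^|K|` cancels the probability `2^(-|K|)`, leaving `∏_{j ∈ J} (1 − 1) = 0`. -/
lemma integral_sign_prod {Ω : Type*} [MeasurableSpace Ω] (μ : Measure Ω)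
    [IsProbabilityMeasure μ] {d : ℕ} (s : Ω → Fin d → ℝ) (hms : Measurable s)
    (hfs : FourWiseSigns μ s) (J : Finset (Fin d)) (hJ : J.card ≤ 4) (hne : J.Nonempty) :
    ∫ ω, ∏ j ∈ J, s ω j ∂μ = 0 := by
  classical
  have hmeas : ∀ K : Finset (Fin d), MeasurableSet {ω | ∀ j ∈ K, s ω j = 1} := by
    intro K
    have hK : {ω | ∀ j ∈ K, s ω j = 1} = ⋂ j ∈ K, {ω | s ω j = 1} := by ext; simp
    rw [hK]
    exact Finset.measurableSet_biInter _ fun j _ =>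
      ((measurable_pi_apply j).comp hms) (measurableSet_singleton 1)
  have hexp : ∀ ω, ∏ j ∈ J, s ω j = ∑ K ∈ J.powerset,
      ({ω | ∀ j ∈ K, s ω j = 1}.indicator (fun _ => (2 : ℝ) ^ K.card) ω)
        * ∏ j ∈ J \ K, (-1 : ℝ) := by
    intro ω
    have h1 : ∀ j ∈ J, s ω j = (if s ω j = 1 then 2 else 0) + (-1 : ℝ) := by
      intro j _
      rcases hfs.1 ω j with h | h <;> rw [h] <;> norm_num
    rw [Finset.prod_congr rfl h1, Finset.prod_add]
    refine Finset.sum_congr rfl fun K _ => ?_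
    congr 1
    by_cases hK : ∀ j ∈ K, s ω j = 1
    · rw [Set.indicator_of_mem (by exact hK), Finset.prod_congr rfl fun j hj => if_pos (hK j hj)]
      simp
    · rw [Set.indicator_of_notMem (by exact hK)]
      push Not at hK
      obtain ⟨j, hj, hj1⟩ := hK
      exact Finset.prod_eq_zero hj (if_neg hj1)
  simp_rw [hexp]
  rw [integral_finsetSum]
  · have hK : ∀ K ∈ J.powerset, ∫ ω, ({ω | ∀ j ∈ K, s ω j = 1}.indicator
        (fun _ => (2 : ℝ) ^ K.card) ω) * ∏ j ∈ J \ K, (-1 : ℝ) ∂μ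
        = (∏ j ∈ K, (1 : ℝ)) * ∏ j ∈ J \ K, (-1 : ℝ) := by
      intro K hKJ
      have hp := hfs.2 K ((Finset.card_le_card (Finset.mem_powerset.1 hKJ)).trans hJ)
        (fun _ => 1) (fun _ => Or.inl rfl)
      rw [integral_mul_const, integral_indicator_const _ (hmeas K), measureReal_def, hp]
      congr 1
      simp
    rw [Finset.sum_congr rfl hK, ← Finset.prod_add]
    obtain ⟨j, hj⟩ := hne
    exact Finset.prod_eq_zero hj (by norm_num)
  · intro K _
    exact ((integrable_const _).indicator (hmeas K)).mul_const _

lemma integral_sign_two {Ω : Type*} [MeasurableSpace Ω] (μ : Measure Ω)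
    [IsProbabilityMeasure μ] {d : ℕ} (s : Ω → Fin d → ℝ) (hms : Measurable s)
    (hfs : FourWiseSigns μ s) (a b : Fin d) :
    ∫ ω, s ω a * s ω b ∂μ = if a = b then 1 else 0 := by
  split_ifs with hab
  · subst hab
    have hsq : ∀ ω, s ω a * s ω a = 1 := fun ω => by
      rcases hfs.1 ω a with h | h <;> rw [h] <;> norm_num
    simp [hsq]
  · rw [← integral_sign_prod μ s hms hfs {a, b} (Finset.card_le_two.trans (by norm_num))
      (by simp)]
    simp [Finset.prod_pair hab]

lemma integral_sign_four {Ω : Type*} [MeasurableSpace Ω] (μ : Measure Ω)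
    [IsProbabilityMeasure μ] {d : ℕ} (s : Ω → Fin d → ℝ) (hms : Measurable s)
    (hfs : FourWiseSigns μ s) (a b c e : Fin d) :
    ∫ ω, s ω a * s ω b * s ω c * s ω e ∂μ
      = if (a = b ∧ c = e) ∨ (a = c ∧ b = e) ∨ (a = e ∧ b = c) then 1 else 0 := by
  have hsq : ∀ ω j, s ω j * s ω j = 1 := fun ω j => by
    rcases hfs.1 ω j with h | h <;> rw [h] <;> norm_num
  -- Two equal indices cancel, which reduces the moment to a second one.
  have key : ∀ j p q : Fin d, (∀ ω, s ω a * s ω b * s ω c * s ω e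
      = (s ω j * s ω j) * (s ω p * s ω q)) →
      ∫ ω, s ω a * s ω b * s ω c * s ω e ∂μ = if p = q then 1 else 0 := by
    intro j p q hω
    rw [← integral_sign_two μ s hms hfs p q]
    exact integral_congr_ae (.of_forall fun ω => by simp only [hω, hsq, one_mul])
  by_cases hab : a = b
  · rw [key a c e fun ω => by rw [← hab]; ring]; grind
  by_cases hac : a = c
  · rw [key a b e fun ω => by rw [← hac]; ring]; grind
  by_cases hae : a = e
  · rw [key a b c fun ω => by rw [← hae]; ring]; grind
  by_cases hbc : b = c
  · rw [key b a e fun ω => by rw [← hbc]; ring]; grind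
  by_cases hbe : b = e
  · rw [key b a c fun ω => by rw [← hbe]; ring]; grind
  by_cases hce : c = e
  · rw [key c a b fun ω => by rw [← hce]; ring]; grind
  rw [if_neg (by tauto), ← integral_sign_prod μ s hms hfs {a, b, c, e} Finset.card_le_four
    (by simp)]
  refine integral_congr_ae (.of_forall fun ω => ?_)
  simp [Finset.prod_insert, hab, hac, hae, hbc, hbe, hce, mul_assoc]

lemma integral_hash_two {Ω : Type*} [MeasurableSpace Ω] (μ : Measure Ω)
    [IsProbabilityMeasure μ] {d t : ℕ} (h : Ω → Fin d → Fin t) (hmh : Measurable h)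
    (hph : PairwiseUniform μ h) (i : Fin t) (a b : Fin d) :
    ∫ ω, (if h ω a = i then (1 : ℝ) else 0) * (if h ω b = i then 1 else 0) ∂μ
      = if a = b then 1 / (t : ℝ) else 1 / (t : ℝ) ^ 2 := by
  have hp := hph {a, b} Finset.card_le_two (fun _ => i)
  have hm : ∀ j, MeasurableSet {ω | h ω j = i} := fun j =>
    ((measurable_pi_apply j).comp hmh) (measurableSet_singleton i)
  have hset : MeasurableSet {ω | ∀ j ∈ ({a, b} : Finset (Fin d)), h ω j = i} := by
    have : {ω | ∀ j ∈ ({a, b} : Finset (Fin d)), h ω j = i}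
        = {ω | h ω a = i} ∩ {ω | h ω b = i} := by ext; simp
    rw [this]
    exact (hm a).inter (hm b)
  have hind : ∀ ω, (if h ω a = i then (1 : ℝ) else 0) * (if h ω b = i then 1 else 0)
      = {ω | ∀ j ∈ ({a, b} : Finset (Fin d)), h ω j = i}.indicator (fun _ => 1) ω := by
    intro ω
    simp only [Set.indicator_apply, Set.mem_ofPred_eq, Finset.mem_insert, Finset.mem_singleton,
      forall_eq_or_imp, forall_eq]
    split_ifs <;> simp_all
  simp_rw [hind]
  rw [integral_indicator_const _ hset, measureReal_def, hp]
  split_ifs with hab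
  · simp [hab]
  · simp [Finset.card_pair hab]

/-- The expectation of one term in the expansion of the fourth power. The right-hand side runs over
the three pairings of `a, b, c, e` and corrects for the diagonal, which lies in all three. -/
lemma integral_term {Ω : Type*} [MeasurableSpace Ω] (μ : Measure Ω)
    [IsProbabilityMeasure μ] {d t : ℕ}
    (h : Ω → Fin d → Fin t) (s : Ω → Fin d → ℝ)
    (hmh : Measurable h) (hms : Measurable s)
    (hph : PairwiseUniform μ h) (hfs : FourWiseSigns μ s)
    (hhs : IndepFun h s μ) (i : Fin t) (P : Fin d → Fin d → ℝ)
    (hP : ∀ a b, P a b = if a = b then 1 / (t : ℝ) else 1 / (t : ℝ) ^ 2) (a b c e : Fin d) :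
    ∫ ω, ((if h ω a = i then (1 : ℝ) else 0) * (if h ω b = i then 1 else 0)
        * (if h ω c = i then 1 else 0) * (if h ω e = i then 1 else 0))
        * (s ω a * s ω b * s ω c * s ω e) ∂μ
      = (if a = b then if c = e then P a c else 0 else 0)
        + (if a = c then if b = e then P a b else 0 else 0)
        + (if a = e then if b = c then P a b else 0 else 0)
        - 2 * (if a = b then if a = c then if a = e then P a a else 0 else 0 else 0) := by
  have hI : Measurable fun g : Fin d → Fin t => (if g a = i then (1 : ℝ) else 0)
      * (if g b = i then 1 else 0) * (if g c = i then 1 else 0) * (if g e = i then 1 else 0) :=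
    measurable_of_countable _
  have hS : Measurable fun r : Fin d → ℝ => r a * r b * r c * r e := by fun_prop
  have hind := hhs.comp hI hS
  have hfac := hind.integral_fun_mul_eq_mul_integral
    (hI.comp hmh).aestronglyMeasurable (hS.comp hms).aestronglyMeasurable
  simp only [Function.comp_apply] at hfac
  rw [hfac, integral_sign_four μ s hms hfs]
  -- For paired indices the product of four indicators collapses to two of them.
  have key : ∀ p q : Fin d, (∀ ω, (if h ω a = i then (1 : ℝ) else 0)
      * (if h ω b = i then 1 else 0) * (if h ω c = i then 1 else 0) * (if h ω e = i then 1 else 0)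
      = (if h ω p = i then (1 : ℝ) else 0) * (if h ω q = i then 1 else 0)) →
      ∫ ω, (if h ω a = i then (1 : ℝ) else 0)
      * (if h ω b = i then 1 else 0) * (if h ω c = i then 1 else 0)
      * (if h ω e = i then 1 else 0) ∂μ = P p q := by
    intro p q hω
    rw [hP, ← integral_hash_two μ h hmh hph i p q]
    exact integral_congr_ae (.of_forall hω)
  by_cases h1 : a = b ∧ c = e
  · obtain ⟨rfl, rfl⟩ := h1
    rw [key a c fun ω => by split_ifs <;> simp]
    by_cases hac : a = c
    · subst hac; simp; ring
    · simp [hac]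
  by_cases h2 : a = c ∧ b = e
  · obtain ⟨rfl, rfl⟩ := h2
    rw [key a b fun ω => by split_ifs <;> simp]
    have hab : a ≠ b := fun hab => h1 ⟨hab, hab⟩
    simp [hab]
  by_cases h3 : a = e ∧ b = c
  · obtain ⟨rfl, rfl⟩ := h3
    rw [key a b fun ω => by split_ifs <;> simp]
    have hab : a ≠ b := fun hab => h1 ⟨hab, hab.symm⟩
    simp [hab]
  rw [if_neg (by tauto)]
  grind

/-- For a fixed `x ∈ ℝ^d` and the random sketch map `L` defined from `h` and `s`:
`E[(Lx)_i⁴] = ‖x‖₄⁴/t + (3/t²)·(‖x‖₂⁴ − ‖x‖₄⁴)` for every `i ∈ [t]`. -/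
theorem sketch_fourth_moment {Ω : Type*} [MeasurableSpace Ω] (μ : Measure Ω)
    [IsProbabilityMeasure μ] {d t : ℕ} (hd : 0 < d) (ht : 0 < t)
    (h : Ω → Fin d → Fin t) (s : Ω → Fin d → ℝ)
    (hmh : Measurable h) (hms : Measurable s)
    (hph : PairwiseUniform μ h) (hfs : FourWiseSigns μ s)
    (hhs : IndepFun h s μ)
    (x : Fin d → ℝ) (i : Fin t) :
    ∫ ω, (sketch (h ω) (s ω) x i) ^ 4 ∂μ
      = (∑ j, x j ^ 4) / t + 3 / (t : ℝ) ^ 2 * ((∑ j, x j ^ 2) ^ 2 - ∑ j, x j ^ 4) := by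
  classical
  set P : Fin d → Fin d → ℝ := fun a b => if a = b then 1 / (t : ℝ) else 1 / (t : ℝ) ^ 2 with hP
  have hexp : ∀ ω, (sketch (h ω) (s ω) x i) ^ 4 = ∑ a, ∑ b, ∑ c, ∑ e, (x a * x b * x c * x e) *
      (((if h ω a = i then (1 : ℝ) else 0) * (if h ω b = i then 1 else 0)
        * (if h ω c = i then 1 else 0) * (if h ω e = i then 1 else 0))
        * (s ω a * s ω b * s ω c * s ω e)) := by
    intro ω
    have hs : sketch (h ω) (s ω) x i
        = ∑ j, x j * ((if h ω j = i then (1 : ℝ) else 0) * s ω j) := by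
      refine Finset.sum_congr rfl fun j _ => ?_
      split_ifs <;> ring
    have h4 : ∀ f : Fin d → ℝ, (∑ j, f j) ^ 4 = ∑ a, ∑ b, ∑ c, ∑ e, f a * f b * f c * f e := by
      intro f
      simp only [← Finset.mul_sum, ← Finset.sum_mul]
      ring
    rw [hs, h4]
    refine Finset.sum_congr rfl fun a _ => Finset.sum_congr rfl fun b _ =>
      Finset.sum_congr rfl fun c _ => Finset.sum_congr rfl fun e _ => ?_
    ring
  have hint : ∀ a b c e : Fin d, Integrable (fun ω => (x a * x b * x c * x e) *
      (((if h ω a = i then (1 : ℝ) else 0) * (if h ω b = i then 1 else 0)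
        * (if h ω c = i then 1 else 0) * (if h ω e = i then 1 else 0))
        * (s ω a * s ω b * s ω c * s ω e))) μ := by
    intro a b c e
    refine Integrable.const_mul ?_ _
    have hI : Measurable fun g : Fin d → Fin t => (if g a = i then (1 : ℝ) else 0)
        * (if g b = i then 1 else 0) * (if g c = i then 1 else 0) * (if g e = i then 1 else 0) :=
      measurable_of_countable _
    have hS : Measurable fun r : Fin d → ℝ => r a * r b * r c * r e := by fun_prop
    refine Integrable.of_bound ((hI.comp hmh).mul (hS.comp hms)).aestronglyMeasurable 1
      (.of_forall fun ω => ?_)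
    have habs : ∀ j, |s ω j| = 1 := fun j => by
      rcases hfs.1 ω j with h | h <;> rw [h] <;> norm_num
    simp only [Real.norm_eq_abs, abs_mul, habs]
    split_ifs <;> simp
  simp_rw [hexp]
  have hterm : ∀ a b c e : Fin d, ∫ ω, (x a * x b * x c * x e) *
      (((if h ω a = i then (1 : ℝ) else 0) * (if h ω b = i then 1 else 0)
        * (if h ω c = i then 1 else 0) * (if h ω e = i then 1 else 0))
        * (s ω a * s ω b * s ω c * s ω e)) ∂μ
      = (if a = b then if c = e then x a * x b * x c * x e * P a c else 0 else 0)
        + (if a = c then if b = e then x a * x b * x c * x e * P a b else 0 else 0)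
        + (if a = e then if b = c then x a * x b * x c * x e * P a b else 0 else 0)
        - (if a = b then if a = c then if a = e then
            2 * (x a * x b * x c * x e) * P a a else 0 else 0 else 0) := by
    intro a b c e
    rw [integral_const_mul, integral_term μ h s hmh hms hph hfs hhs i P (fun _ _ => rfl)]
    split_ifs <;> ring
  have hsum : ∫ ω, ∑ a, ∑ b, ∑ c, ∑ e, (x a * x b * x c * x e) *
      (((if h ω a = i then (1 : ℝ) else 0) * (if h ω b = i then 1 else 0)
        * (if h ω c = i then 1 else 0) * (if h ω e = i then 1 else 0))
        * (s ω a * s ω b * s ω c * s ω e)) ∂μ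
      = 3 * ∑ a, ∑ b, x a ^ 2 * x b ^ 2 * P a b - 2 * ∑ a, x a ^ 4 * P a a := by
    rw [integral_finsetSum _ fun a _ => integrable_finsetSum _ fun b _ =>
      integrable_finsetSum _ fun c _ => integrable_finsetSum _ fun e _ => hint a b c e]
    simp_rw [integral_finsetSum _ fun b _ =>
      integrable_finsetSum _ fun c _ => integrable_finsetSum _ fun e _ => hint _ b c e,
      integral_finsetSum _ fun c _ => integrable_finsetSum _ fun e _ => hint _ _ c e,
      integral_finsetSum _ fun e _ => hint _ _ _ e, hterm]
    rw [Finset.mul_sum, Finset.mul_sum, ← Finset.sum_sub_distrib]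
    refine Finset.sum_congr rfl fun a _ => ?_
    simp only [Finset.sum_add_distrib, Finset.sum_sub_distrib, Finset.sum_ite_irrel,
      Finset.sum_const_zero, Finset.sum_ite_eq, Finset.mem_univ, if_true]
    have e1 : ∀ b, x a * x a * x b * x b * P a b = x a ^ 2 * x b ^ 2 * P a b := fun b => by ring
    have e2 : ∀ b, x a * x b * x a * x b * P a b = x a ^ 2 * x b ^ 2 * P a b := fun b => by ring
    have e3 : ∀ b, x a * x b * x b * x a * P a b = x a ^ 2 * x b ^ 2 * P a b := fun b => by ring
    simp only [e1, e2, e3]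
    ring
  rw [hsum]
  have hPab : ∀ a b, x a ^ 2 * x b ^ 2 * P a b = x a ^ 2 * x b ^ 2 * (1 / (t : ℝ) ^ 2)
      + if a = b then x a ^ 2 * x b ^ 2 * (1 / (t : ℝ) - 1 / (t : ℝ) ^ 2) else 0 := by
    intro a b
    simp only [hP]
    split_ifs <;> ring
  have hPaa : ∀ a, x a ^ 4 * P a a = x a ^ 4 * (1 / (t : ℝ)) := fun a => by simp [hP]
  have hx4 : ∀ a, x a ^ 2 * x a ^ 2 = x a ^ 4 := fun a => by ring
  simp only [hPab, hPaa, Finset.sum_add_distrib, Finset.sum_ite_eq, Finset.mem_univ, if_true, hx4,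
    ← Finset.sum_mul, ← Finset.mul_sum]
  ring
end

section
/- Let x ∈ ℝ^d be a fixed vector, let α ∈ (0, 1/√2] and δ ∈ (0,1), and let L be the random sketch map defined from h and s. If t ≥ 1/(2α⁴δ), then with probability at least 1 − 3δ the following hold simultaneously: (1) |‖Lx‖_∞ − ‖x‖_∞| ≤ (2√α/δ^{1/4})·‖x‖₂, and (2) ‖Lx‖₂² ≤ (1 + 2α²)·‖x‖₂². -/
/-!
Write `N = ‖x‖₂²`, and call a coordinate large if `x_j² > α² N`.  Let `z` and `y` be the
restrictions of `x` to its large and its small coordinates.  The collision energy `collision v h`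
is the sum of `v_j² v_k²` over ordered pairs `j ≠ k` in the same bucket; its mean is at most
`‖v‖₂⁴ / t` by pairwise independence (`integral_collision_le`), and `1 / t ≤ 2 α⁴ δ`.
By 4-wise independence, an off-diagonal quadratic form in the signs has second moment twice the
expected sum of its squared coefficients (`integral_quadForm_sq`).  Three applications of Markov's
inequality, each losing probability at most `δ`, give the result:

* `E (‖Lx‖₂² - N)² ≤ 2 N² / t ≤ 4 α⁴ δ N²`, so `‖Lx‖₂² ≤ (1 + 2 α²) N`.
* If two large coordinates collide, then `collision z h ≥ 2 α⁴ N²`, whose mean is at most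
  `2 α⁴ δ N²`; so all large coordinates are in distinct buckets.
* `(Ly)_i²` is the bucket mass plus an off-diagonal form, whence
  `E max_i (Ly)_i⁴ ≤ 2 ‖y‖₄⁴ + 6 N² / t ≤ 16 α² N² = B⁴ δ`, where
  `B = 2 √α δ^(-1/4) ‖x‖₂`; so `‖Ly‖_∞ ≤ B`.

When large coordinates do not collide and `‖Ly‖_∞ ≤ B`, each bucket contains at most one large
coordinate plus an error `B`, and small coordinates are themselves at most `B`, so `‖Lx‖_∞` and
`‖x‖_∞` differ by at most `B` (`sup_dev_le`).
-/

open MeasureTheory ProbabilityTheory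
open scoped ENNReal BigOperators

/-- Expanding each sign as `1[s_j = 1] - 1[s_j = -1]`, every sign pattern on `J` has the same
probability, so the alternating sum over patterns vanishes. -/
lemma FourWiseSigns.integral_prod_eq_zero {Ω : Type*} [MeasurableSpace Ω] {μ : Measure Ω}
    [IsProbabilityMeasure μ] {d : ℕ} {s : Ω → Fin d → ℝ} (hms : Measurable s)
    (hfs : FourWiseSigns μ s) (J : Finset (Fin d)) (hJ : J.card ≤ 4) (hne : J.Nonempty) :
    ∫ ω, ∏ j ∈ J, s ω j ∂μ = 0 := by
  classical
  have hmeas : ∀ j, Measurable fun ω => s ω j := fun j => (measurable_pi_apply j).comp hms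
  have hexp : ∀ ω, ∏ j ∈ J, s ω j = ∑ T ∈ J.powerset, (-1 : ℝ) ^ (J \ T).card *
      Set.indicator {ω | ∀ j ∈ J, s ω j = if j ∈ T then 1 else -1} (fun _ => (1 : ℝ)) ω := by
    intro ω
    have h1 : ∀ j ∈ J, s ω j = (if s ω j = 1 then (1 : ℝ) else 0) +
        (-1) * (if s ω j = -1 then (1 : ℝ) else 0) := by
      intro j _
      rcases hfs.1 ω j with h | h <;> rw [h] <;> norm_num
    rw [Finset.prod_congr rfl h1, Finset.prod_add]
    refine Finset.sum_congr rfl fun T hT => ?_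
    rw [Finset.mem_powerset] at hT
    rw [Finset.prod_mul_distrib, Finset.prod_const, Finset.prod_boole, Finset.prod_boole,
      mul_left_comm]
    congr 1
    rw [Set.indicator_apply]
    have hiff : ((∀ j ∈ T, s ω j = 1) ∧ ∀ j ∈ J \ T, s ω j = -1) ↔
        ω ∈ {ω | ∀ j ∈ J, s ω j = if j ∈ T then (1 : ℝ) else -1} := ?_
    · by_cases h1 : ∀ j ∈ T, s ω j = 1
      · by_cases h2 : ∀ j ∈ J \ T, s ω j = -1
        · rw [if_pos h1, if_pos h2, if_pos (hiff.1 ⟨h1, h2⟩), one_mul]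
        · rw [if_neg h2, if_neg fun h => h2 (hiff.2 h).2, mul_zero]
      · rw [if_neg h1, if_neg fun h => h1 (hiff.2 h).1, zero_mul]
    simp only [Set.mem_ofPred_eq, Finset.mem_sdiff]
    constructor
    · rintro ⟨h1, h2⟩ j hj
      by_cases hjT : j ∈ T
      · simp [hjT, h1 j hjT]
      · simp [hjT, h2 j ⟨hj, hjT⟩]
    · intro h
      exact ⟨fun j hj => by simpa [hj] using h j (hT hj),
        fun j hj => by simpa [hj.2] using h j hj.1⟩
  have hset : ∀ T : Finset (Fin d),
      MeasurableSet {ω | ∀ j ∈ J, s ω j = if j ∈ T then (1 : ℝ) else -1} := by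
    intro T
    have : {ω | ∀ j ∈ J, s ω j = if j ∈ T then (1 : ℝ) else -1} =
        ⋂ j ∈ J, {ω | s ω j = if j ∈ T then (1 : ℝ) else -1} := by ext; simp
    rw [this]
    exact Finset.measurableSet_biInter _ fun j _ =>
      measurableSet_eq_fun (hmeas j) measurable_const
  simp_rw [hexp]
  rw [integral_finsetSum _ fun T _ =>
    ((integrable_const (1 : ℝ)).indicator (hset T)).const_mul _]
  have hterm : ∀ T ∈ J.powerset, ∫ ω, (-1 : ℝ) ^ (J \ T).card *
      Set.indicator {ω | ∀ j ∈ J, s ω j = if j ∈ T then (1 : ℝ) else -1} (fun _ => (1 : ℝ)) ω ∂μ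
      = (∏ _j ∈ T, (2⁻¹ : ℝ)) * ∏ _j ∈ J \ T, (-2⁻¹ : ℝ) := by
    intro T hT
    rw [Finset.mem_powerset] at hT
    rw [integral_const_mul, integral_indicator_const _ (hset T), Measure.real,
      hfs.2 J hJ _ (fun j => by by_cases h : j ∈ T <;> simp [h])]
    rw [Finset.prod_const, Finset.prod_const, ← Finset.card_sdiff_add_card_eq_card hT]
    simp only [ENNReal.toReal_pow, ENNReal.toReal_inv, ENNReal.toReal_ofNat, smul_eq_mul, mul_one]
    rw [neg_pow (2⁻¹ : ℝ), pow_add]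
    ring
  rw [Finset.sum_congr rfl hterm, ← Finset.prod_add]
  simp [hne.ne_empty]

lemma FourWiseSigns.integral_four {Ω : Type*} [MeasurableSpace Ω] {μ : Measure Ω}
    [IsProbabilityMeasure μ] {d : ℕ} {s : Ω → Fin d → ℝ} (hms : Measurable s)
    (hfs : FourWiseSigns μ s) {j k l m : Fin d} (hjk : j ≠ k) (hlm : l ≠ m) :
    ∫ ω, (s ω j * s ω k) * (s ω l * s ω m) ∂μ =
      (if j = l ∧ k = m then 1 else 0) + (if j = m ∧ k = l then 1 else 0) := by
  classical
  have hsq : ∀ ω j, s ω j * s ω j = 1 := by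
    intro ω j
    rcases hfs.1 ω j with h | h <;> rw [h] <;> norm_num
  have two : ∀ a b : Fin d, a ≠ b → ∫ ω, s ω a * s ω b ∂μ = 0 := by
    intro a b hab
    have := hfs.integral_prod_eq_zero hms {a, b} (by rw [Finset.card_pair hab]; norm_num)
      ⟨a, by simp⟩
    simpa [Finset.prod_pair hab] using this
  by_cases h1 : j = l
  · subst h1
    have : ∀ ω, (s ω j * s ω k) * (s ω j * s ω m) = s ω k * s ω m := fun ω => by
      linear_combination (s ω k * s ω m) * hsq ω j
    simp_rw [this]
    by_cases h2 : k = m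
    · subst h2
      simp [hsq, hjk]
    · simp [h2, hlm, two k m h2]
  by_cases h2 : j = m
  · subst h2
    have : ∀ ω, (s ω j * s ω k) * (s ω l * s ω j) = s ω k * s ω l := fun ω => by
      linear_combination (s ω k * s ω l) * hsq ω j
    simp_rw [this]
    by_cases h3 : k = l
    · subst h3
      simp [hsq, hjk]
    · simp [h1, h3, two k l h3]
  by_cases h3 : k = l
  · subst h3
    have : ∀ ω, (s ω j * s ω k) * (s ω k * s ω m) = s ω j * s ω m := fun ω => by
      linear_combination (s ω j * s ω m) * hsq ω k
    simp_rw [this]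
    simp [h1, h2, two j m h2]
  by_cases h4 : k = m
  · subst h4
    have : ∀ ω, (s ω j * s ω k) * (s ω l * s ω k) = s ω j * s ω l := fun ω => by
      linear_combination (s ω j * s ω l) * hsq ω k
    simp_rw [this]
    simp [h1, h2, two j l h1]
  have := hfs.integral_prod_eq_zero hms {j, k, l, m} (Finset.card_le_four) ⟨j, by simp⟩
  rw [if_neg (by tauto), if_neg (by tauto), add_zero, ← this]
  refine integral_congr_ae (Filter.Eventually.of_forall fun ω => ?_)
  simp only
  rw [Finset.prod_insert (by simp [hjk, h1, h2]), Finset.prod_insert (by simp [h3, h4]),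
    Finset.prod_pair hlm]
  ring

/-- An off-diagonal symmetric quadratic form in the signs, whose coefficients depend on the
hash function only, has second moment twice the expected sum of squared coefficients. -/
lemma integral_quadForm_sq {Ω : Type*} [MeasurableSpace Ω] {μ : Measure Ω}
    [IsProbabilityMeasure μ] {d t : ℕ} {h : Ω → Fin d → Fin t} {s : Ω → Fin d → ℝ}
    (hmh : Measurable h) (hms : Measurable s) (hfs : FourWiseSigns μ s)
    (hhs : IndepFun h s μ) (A : (Fin d → Fin t) → Fin d → Fin d → ℝ)
    (hdiag : ∀ H j, A H j j = 0) (hsymm : ∀ H j k, A H j k = A H k j) :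
    Integrable (fun ω => (∑ j, ∑ k, A (h ω) j k * (s ω j * s ω k)) ^ 2) μ ∧
    ∫ ω, (∑ j, ∑ k, A (h ω) j k * (s ω j * s ω k)) ^ 2 ∂μ =
      2 * ∫ ω, ∑ j, ∑ k, A (h ω) j k ^ 2 ∂μ := by
  classical
  have hexp : ∀ ω, (∑ j, ∑ k, A (h ω) j k * (s ω j * s ω k)) ^ 2 =
      ∑ j, ∑ k, ∑ l, ∑ m, (A (h ω) j k * A (h ω) l m) *
        ((s ω j * s ω k) * (s ω l * s ω m)) := by
    intro ω
    rw [sq, Finset.sum_mul]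
    refine Finset.sum_congr rfl fun j _ => ?_
    rw [Finset.sum_mul]
    refine Finset.sum_congr rfl fun k _ => ?_
    rw [Finset.mul_sum]
    refine Finset.sum_congr rfl fun l _ => ?_
    rw [Finset.mul_sum]
    refine Finset.sum_congr rfl fun m _ => ?_
    ring
  have hIh : ∀ g : (Fin d → Fin t) → ℝ, Integrable (fun ω => g (h ω)) μ := fun g =>
    (Integrable.of_finite (f := g) (μ := μ.map h)).comp_measurable hmh
  have hφ : ∀ j k l m : Fin d,
      Measurable fun u : Fin d → ℝ => (u j * u k) * (u l * u m) := by
    intro j k l m; fun_prop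
  have habs : ∀ ω j, |s ω j| = 1 := by
    intro ω j
    rcases hfs.1 ω j with h | h <;> rw [h] <;> norm_num
  have hIs : ∀ j k l m : Fin d,
      Integrable (fun ω => (s ω j * s ω k) * (s ω l * s ω m)) μ := by
    intro j k l m
    refine Integrable.of_bound ((hφ j k l m).comp hms).aestronglyMeasurable 1
      (Filter.Eventually.of_forall fun ω => ?_)
    simp [habs]
  have hind : ∀ j k l m : Fin d, IndepFun (fun ω => A (h ω) j k * A (h ω) l m)
      (fun ω => (s ω j * s ω k) * (s ω l * s ω m)) μ := fun j k l m =>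
    hhs.comp (φ := fun H => A H j k * A H l m) (Measurable.of_discrete) (hφ j k l m)
  have hI : ∀ j k l m : Fin d, Integrable (fun ω => (A (h ω) j k * A (h ω) l m) *
      ((s ω j * s ω k) * (s ω l * s ω m))) μ := fun j k l m =>
    (hind j k l m).integrable_mul (hIh fun H => A H j k * A H l m) (hIs j k l m)
  have hval : ∀ j k l m : Fin d, ∫ ω, (A (h ω) j k * A (h ω) l m) *
      ((s ω j * s ω k) * (s ω l * s ω m)) ∂μ =
      (if j = l then if k = m then ∫ ω, A (h ω) j k ^ 2 ∂μ else 0 else 0) +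
      (if k = l then if j = m then ∫ ω, A (h ω) j k ^ 2 ∂μ else 0 else 0) := by
    intro j k l m
    by_cases hjk : j = k
    · subst hjk
      simp [hdiag]
    by_cases hlm : l = m
    · subst hlm
      simp only [hdiag, mul_zero, zero_mul, integral_zero]
      split_ifs <;> simp_all
    have := (hind j k l m).integral_mul_eq_mul_integral
      (hIh fun H => A H j k * A H l m).aestronglyMeasurable (hIs j k l m).aestronglyMeasurable
    simp only [Pi.mul_apply] at this
    rw [this, hfs.integral_four hms hjk hlm, mul_add]
    congr 1
    · by_cases h1 : j = l
      · by_cases h2 : k = m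
        · subst h1 h2
          simp [sq]
        · simp [h2]
      · simp [h1]
    · by_cases h1 : j = m
      · by_cases h2 : k = l
        · subst h1 h2
          simp only [and_self, if_true, mul_one]
          refine integral_congr_ae (Filter.Eventually.of_forall fun ω => ?_)
          simp only
          rw [hsymm _ k j]; ring
        · simp [h2]
      · simp [h1]
  simp_rw [hexp]
  constructor
  · exact integrable_finsetSum _ fun j _ => integrable_finsetSum _ fun k _ =>
      integrable_finsetSum _ fun l _ => integrable_finsetSum _ fun m _ => hI j k l m
  · rw [integral_finsetSum _ fun j _ => integrable_finsetSum _ fun k _ =>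
      integrable_finsetSum _ fun l _ => integrable_finsetSum _ fun m _ => hI j k l m,
      integral_finsetSum _ fun j _ => integrable_finsetSum _ fun k _ =>
        hIh fun H => A H j k ^ 2, Finset.mul_sum]
    refine Finset.sum_congr rfl fun j _ => ?_
    rw [integral_finsetSum _ fun k _ =>
      integrable_finsetSum _ fun l _ => integrable_finsetSum _ fun m _ => hI j k l m,
      integral_finsetSum _ fun k _ => hIh fun H => A H j k ^ 2, Finset.mul_sum]
    refine Finset.sum_congr rfl fun k _ => ?_
    rw [integral_finsetSum _ fun l _ => integrable_finsetSum _ fun m _ => hI j k l m]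
    have : ∀ l ∈ (Finset.univ : Finset (Fin d)), ∫ ω, ∑ m, (A (h ω) j k * A (h ω) l m) *
        ((s ω j * s ω k) * (s ω l * s ω m)) ∂μ =
        (if j = l then ∫ ω, A (h ω) j k ^ 2 ∂μ else 0) +
        (if k = l then ∫ ω, A (h ω) j k ^ 2 ∂μ else 0) := by
      intro l _
      rw [integral_finsetSum _ fun m _ => hI j k l m]
      simp_rw [hval, Finset.sum_add_distrib]
      congr 1 <;> split_ifs <;> simp
    rw [Finset.sum_congr rfl this, Finset.sum_add_distrib]
    simp
    ring

/-- The collision energy of `y` under the hash function `H`: the sum of `y_j² y_k²` over the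
ordered pairs `j ≠ k` hashed to the same bucket. -/
noncomputable def collision {d t : ℕ} (y : Fin d → ℝ) (H : Fin d → Fin t) : ℝ :=
  ∑ j, ∑ k, if j ≠ k ∧ H j = H k then y j ^ 2 * y k ^ 2 else 0

lemma integral_collision_le {Ω : Type*} [MeasurableSpace Ω] {μ : Measure Ω}
    [IsProbabilityMeasure μ] {d t : ℕ} (ht : 0 < t) {h : Ω → Fin d → Fin t}
    (hmh : Measurable h) (hph : PairwiseUniform μ h) (y : Fin d → ℝ) :
    ∫ ω, collision y (h ω) ∂μ ≤ (∑ j, y j ^ 2) ^ 2 / t := by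
  classical
  have hIh : ∀ g : (Fin d → Fin t) → ℝ, Integrable (fun ω => g (h ω)) μ := fun g =>
    (Integrable.of_finite (f := g) (μ := μ.map h)).comp_measurable hmh
  have ht' : (t : ℝ) ≠ 0 := by positivity
  have hpair : ∀ j k : Fin d, j ≠ k → μ.real {ω | h ω j = h ω k} = 1 / t := by
    intro j k hjk
    have hset : {ω | h ω j = h ω k} =
        ⋃ i ∈ (Finset.univ : Finset (Fin t)), {ω | ∀ l ∈ ({j, k} : Finset (Fin d)), h ω l = i} := by
      ext ω
      simp [eq_comm (a := h ω j)]
    rw [hset, measureReal_biUnion_finset]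
    · have : ∀ i ∈ (Finset.univ : Finset (Fin t)),
          μ.real {ω | ∀ l ∈ ({j, k} : Finset (Fin d)), h ω l = i} = (t : ℝ)⁻¹ ^ 2 := by
        intro i _
        rw [Measure.real, hph {j, k} (by rw [Finset.card_pair hjk]) fun _ => i,
          Finset.card_pair hjk]
        simp
      rw [Finset.sum_congr rfl this]
      simp
      field_simp
    · intro i _ i' _ hii
      refine Set.disjoint_left.2 fun ω h1 h2 => hii ?_
      rw [← h1 j (by simp), ← h2 j (by simp)]
    · intro i _
      exact hmh (MeasurableSet.of_discrete (s := {H | ∀ l ∈ ({j, k} : Finset (Fin d)), H l = i}))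
  unfold collision
  rw [integral_finsetSum _ fun j _ => hIh fun H => ∑ k, if j ≠ k ∧ H j = H k then
    y j ^ 2 * y k ^ 2 else 0, sq, Finset.sum_mul, Finset.sum_div]
  refine Finset.sum_le_sum fun j _ => ?_
  rw [integral_finsetSum _ fun k _ => hIh fun H => if j ≠ k ∧ H j = H k then
    y j ^ 2 * y k ^ 2 else 0, Finset.mul_sum, Finset.sum_div]
  refine Finset.sum_le_sum fun k _ => ?_
  by_cases hjk : j = k
  · simp [hjk]; positivity
  · have : ∀ ω, (if j ≠ k ∧ h ω j = h ω k then y j ^ 2 * y k ^ 2 else 0) =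
        Set.indicator {ω | h ω j = h ω k} (fun _ => y j ^ 2 * y k ^ 2) ω := by
      intro ω
      simp [Set.indicator_apply, hjk]
    simp_rw [this]
    have hm : MeasurableSet {ω | h ω j = h ω k} :=
      hmh (MeasurableSet.of_discrete (s := {H : Fin d → Fin t | H j = H k}))
    rw [integral_indicator_const _ hm, hpair j k hjk, smul_eq_mul]
    apply le_of_eq; ring

/-- `(Ly)_i²` is the mass of the bucket `i` plus an off-diagonal quadratic form in the signs. -/
lemma sketch_sq {d t : ℕ} (H : Fin d → Fin t) (σ : Fin d → ℝ) (hσ : ∀ j, σ j = 1 ∨ σ j = -1)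
    (y : Fin d → ℝ) (i : Fin t) :
    sketch H σ y i ^ 2 = (∑ j, if H j = i then y j ^ 2 else 0) +
      ∑ j, ∑ k, (if j ≠ k ∧ H j = i ∧ H k = i then y j * y k else 0) * (σ j * σ k) := by
  classical
  unfold sketch
  rw [sq, Finset.sum_mul, ← Finset.sum_add_distrib]
  refine Finset.sum_congr rfl fun j _ => ?_
  have h1 : (if H j = i then y j ^ 2 else 0) =
      ∑ k, if k = j then (if H j = i then y j ^ 2 else 0) else 0 := by simp
  rw [h1, ← Finset.sum_add_distrib, Finset.mul_sum]
  refine Finset.sum_congr rfl fun k _ => ?_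
  by_cases hk : k = j
  · subst hk
    have : σ k ^ 2 = 1 := by rcases hσ k with h | h <;> rw [h] <;> norm_num
    by_cases hi : H k = i
    · simp [hi]; linear_combination (y k) ^ 2 * this
    · simp [hi]
  · by_cases hj : H j = i <;> by_cases hki : H k = i <;> simp [hj, hki, hk, Ne.symm hk]
    ring

lemma sum_bucket_sq {d t : ℕ} (y : Fin d → ℝ) (H : Fin d → Fin t) :
    ∑ i, (∑ j, if H j = i then y j ^ 2 else 0) ^ 2 = (∑ j, y j ^ 4) + collision y H := by
  classical
  unfold collision
  simp_rw [sq (∑ j, _), Finset.sum_mul_sum]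
  rw [Finset.sum_comm, ← Finset.sum_add_distrib]
  refine Finset.sum_congr rfl fun j _ => ?_
  rw [Finset.sum_comm]
  have h1 : y j ^ 4 = ∑ k, if k = j then y j ^ 4 else 0 := by simp
  rw [h1, ← Finset.sum_add_distrib]
  refine Finset.sum_congr rfl fun k _ => ?_
  simp_rw [ite_mul, zero_mul]
  rw [Finset.sum_ite_eq]
  by_cases hk : k = j
  · subst hk; simp; ring
  · simp [hk, Ne.symm hk, eq_comm]

lemma sum_offDiag_sq {d t : ℕ} (y : Fin d → ℝ) (H : Fin d → Fin t) :
    ∑ i, ∑ j, ∑ k, (if j ≠ k ∧ H j = i ∧ H k = i then y j * y k else 0) ^ 2 =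
      collision y H := by
  classical
  unfold collision
  rw [Finset.sum_comm]
  refine Finset.sum_congr rfl fun j _ => ?_
  rw [Finset.sum_comm]
  refine Finset.sum_congr rfl fun k _ => ?_
  rw [Finset.sum_eq_single (H j)]
  · by_cases h1 : j = k <;> by_cases h2 : H j = H k <;> simp [h1, h2, eq_comm, mul_pow]
  · intro i _ hi
    simp [hi.symm]
  · simp

lemma collision_nonneg {d t : ℕ} (y : Fin d → ℝ) (H : Fin d → Fin t) : 0 ≤ collision y H :=
  Finset.sum_nonneg fun j _ => Finset.sum_nonneg fun k _ => by split_ifs <;> positivity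

/-- Second moment of `‖Ly‖₂² - ‖y‖₂²`. -/
lemma integral_norm_sq_dev {Ω : Type*} [MeasurableSpace Ω] {μ : Measure Ω}
    [IsProbabilityMeasure μ] {d t : ℕ} (ht : 0 < t) {h : Ω → Fin d → Fin t} {s : Ω → Fin d → ℝ}
    (hmh : Measurable h) (hms : Measurable s) (hph : PairwiseUniform μ h)
    (hfs : FourWiseSigns μ s) (hhs : IndepFun h s μ) (y : Fin d → ℝ) :
    Integrable (fun ω => (∑ i, sketch (h ω) (s ω) y i ^ 2 - ∑ j, y j ^ 2) ^ 2) μ ∧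
    ∫ ω, (∑ i, sketch (h ω) (s ω) y i ^ 2 - ∑ j, y j ^ 2) ^ 2 ∂μ
      ≤ 2 * ((∑ j, y j ^ 2) ^ 2 / t) := by
  classical
  have key : ∀ ω, ∑ i, sketch (h ω) (s ω) y i ^ 2 - ∑ j, y j ^ 2 =
      ∑ j, ∑ k, (if j ≠ k ∧ h ω j = h ω k then y j * y k else 0) * (s ω j * s ω k) := by
    intro ω
    simp_rw [sketch_sq (h ω) (s ω) (hfs.1 ω) y]
    rw [Finset.sum_add_distrib, Finset.sum_comm]
    simp only [Finset.sum_ite_eq, Finset.mem_univ, if_true, add_sub_cancel_left]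
    rw [Finset.sum_comm]
    refine Finset.sum_congr rfl fun j _ => ?_
    rw [Finset.sum_comm]
    refine Finset.sum_congr rfl fun k _ => ?_
    rw [← Finset.sum_mul]
    congr 1
    rw [Finset.sum_eq_single (h ω j)]
    · simp [eq_comm]
    · intro i _ hi
      simp [hi.symm]
    · simp
  simp_rw [key]
  obtain ⟨h1, h2⟩ := integral_quadForm_sq hmh hms hfs hhs
    (fun H j k => if j ≠ k ∧ H j = H k then y j * y k else 0) (by simp)
    (fun H j k => by simp only [ne_comm, eq_comm, mul_comm])
  refine ⟨h1, h2.trans_le ?_⟩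
  have := integral_collision_le ht hmh hph y
  unfold collision at this
  simp only [ite_pow, mul_pow, ne_eq, OfNat.ofNat_ne_zero, not_false_eq_true, zero_pow] at this ⊢
  linarith

/-- A fourth-moment bound for `‖Ly‖_∞`: an integrable majorant `Q` of all the `(Ly)_i⁴`, obtained
from `(a + b)² ≤ 2 (a² + b²)` applied to the decomposition in `sketch_sq`. -/
lemma integral_fourth {Ω : Type*} [MeasurableSpace Ω] {μ : Measure Ω}
    [IsProbabilityMeasure μ] {d t : ℕ} (ht : 0 < t) {h : Ω → Fin d → Fin t} {s : Ω → Fin d → ℝ}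
    (hmh : Measurable h) (hms : Measurable s) (hph : PairwiseUniform μ h)
    (hfs : FourWiseSigns μ s) (hhs : IndepFun h s μ) (y : Fin d → ℝ) :
    ∃ Q : Ω → ℝ, Integrable Q μ ∧ (∀ ω i, sketch (h ω) (s ω) y i ^ 4 ≤ Q ω) ∧
      ∫ ω, Q ω ∂μ ≤ 2 * (∑ j, y j ^ 4) + 6 * ((∑ j, y j ^ 2) ^ 2 / t) := by
  classical
  have hIh : ∀ g : (Fin d → Fin t) → ℝ, Integrable (fun ω => g (h ω)) μ := fun g =>
    (Integrable.of_finite (f := g) (μ := μ.map h)).comp_measurable hmh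
  let A : Fin t → (Fin d → Fin t) → Fin d → Fin d → ℝ := fun i H j k =>
    if j ≠ k ∧ H j = i ∧ H k = i then y j * y k else 0
  have hquad := fun i => integral_quadForm_sq hmh hms hfs hhs (A i) (by simp [A])
    (fun H j k => by simp only [A, ne_comm, mul_comm, and_comm])
  have hI1 : Integrable (fun ω => ∑ i, (∑ j, ∑ k, A i (h ω) j k * (s ω j * s ω k)) ^ 2) μ :=
    integrable_finsetSum _ fun i _ => (hquad i).1
  have hI2 := hIh fun H => (∑ j, y j ^ 4) + collision y H
  refine ⟨fun ω => 2 * ((∑ j, y j ^ 4) + collision y (h ω)) +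
    2 * ∑ i, (∑ j, ∑ k, A i (h ω) j k * (s ω j * s ω k)) ^ 2,
    (hI2.const_mul 2).add (hI1.const_mul 2), ?_, ?_⟩
  · intro ω i
    have h4 : sketch (h ω) (s ω) y i ^ 4 = (sketch (h ω) (s ω) y i ^ 2) ^ 2 := by ring
    beta_reduce
    rw [h4, sketch_sq (h ω) (s ω) (hfs.1 ω) y, ← sum_bucket_sq y (h ω)]
    have e1 := Finset.single_le_sum
      (f := fun i => (∑ j, if h ω j = i then y j ^ 2 else 0) ^ 2)
      (fun i _ => sq_nonneg _) (Finset.mem_univ i)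
    have e2 := Finset.single_le_sum
      (f := fun i => (∑ j, ∑ k, A i (h ω) j k * (s ω j * s ω k)) ^ 2)
      (fun i _ => sq_nonneg _) (Finset.mem_univ i)
    refine (add_sq_le).trans ?_
    simp only [A] at e1 e2 ⊢
    linarith
  · rw [integral_add (hI2.const_mul 2) (hI1.const_mul 2), integral_const_mul, integral_const_mul,
      integral_add (integrable_const _) (hIh _), integral_finsetSum _ fun i _ => (hquad i).1]
    simp_rw [(hquad _).2]
    rw [← Finset.mul_sum, ← integral_finsetSum _ fun i _ =>
      hIh fun H => ∑ j, ∑ k, A i H j k ^ 2]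
    simp only [A, sum_offDiag_sq]
    have := integral_collision_le ht hmh hph y
    simp
    linarith

/-- Markov's inequality in the form used for each bad event. -/
lemma markov_le {Ω : Type*} [MeasurableSpace Ω] {μ : Measure Ω} [IsProbabilityMeasure μ]
    {f : Ω → ℝ} (hf : Integrable f μ) (h0 : ∀ ω, 0 ≤ f ω) {c δ : ℝ} (hc : 0 < c) (hδ : 0 ≤ δ)
    (hint : ∫ ω, f ω ∂μ ≤ c * δ) : μ {ω | c ≤ f ω} ≤ ENNReal.ofReal δ := by
  have := mul_meas_ge_le_integral_of_nonneg (Filter.Eventually.of_forall h0) hf c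
  rw [ENNReal.le_ofReal_iff_toReal_le (measure_ne_top _ _) hδ]
  exact le_of_mul_le_mul_left (this.trans hint) hc

/-- Deterministic comparison: if no two `big` coordinates collide, and the remaining ones are
at most `B` both individually and after sketching, then `‖Lx‖_∞` and `‖x‖_∞` differ by at
most `B`. -/
lemma sup_dev_le {d t : ℕ} (hd : 0 < d) (ht : 0 < t) (H : Fin d → Fin t) (σ : Fin d → ℝ)
    (hσ : ∀ j, σ j = 1 ∨ σ j = -1) (x : Fin d → ℝ) (big : Fin d → Prop) [DecidablePred big]
    (B : ℝ) (hsmall : ∀ j, ¬ big j → |x j| ≤ B)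
    (hcol : ∀ j k, big j → big k → H j = H k → j = k)
    (hlight : ∀ i, |sketch H σ (fun j => if big j then 0 else x j) i| ≤ B) :
    abs ((⨆ i, |sketch H σ x i|) - ⨆ j, |x j|) ≤ B := by
  classical
  have : Nonempty (Fin d) := ⟨⟨0, hd⟩⟩
  have : Nonempty (Fin t) := ⟨⟨0, ht⟩⟩
  have hB : 0 ≤ B := (abs_nonneg _).trans (hlight ⟨0, ht⟩)
  have hσa : ∀ j, |σ j| = 1 := by
    intro j
    rcases hσ j with h | h <;> rw [h] <;> norm_num
  have bx : BddAbove (Set.range fun j => |x j|) := (Set.finite_range _).bddAbove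
  have bL : BddAbove (Set.range fun i => |sketch H σ x i|) := (Set.finite_range _).bddAbove
  have hsplit : ∀ i, sketch H σ x i = sketch H σ (fun j => if big j then 0 else x j) i +
      ∑ j, if H j = i ∧ big j then σ j * x j else 0 := by
    intro i
    unfold sketch
    rw [← Finset.sum_add_distrib]
    refine Finset.sum_congr rfl fun j _ => ?_
    by_cases h1 : H j = i <;> by_cases h2 : big j <;> simp [h1, h2]
  have hone : ∀ j, big j → (∑ k, if H k = H j ∧ big k then σ k * x k else 0) = σ j * x j := by
    intro j hj
    rw [Finset.sum_eq_single j]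
    · simp [hj]
    · intro k _ hk
      rw [if_neg]
      rintro ⟨h1, h2⟩
      exact hk (hcol k j h2 hj h1)
    · simp
  rw [abs_sub_le_iff]
  constructor
  · rw [sub_le_iff_le_add]
    refine ciSup_le fun i => ?_
    rw [hsplit i]
    refine (abs_add_le _ _).trans (add_le_add (hlight i) ?_)
    by_cases hex : ∃ j, H j = i ∧ big j
    · obtain ⟨j, rfl, hj⟩ := hex
      rw [hone j hj, abs_mul, hσa, one_mul]
      exact le_ciSup bx j
    · push Not at hex
      rw [Finset.sum_eq_zero fun j _ => if_neg (by rintro ⟨h1, h2⟩; exact hex j h1 h2), abs_zero]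
      exact (abs_nonneg _).trans (le_ciSup bx ⟨0, hd⟩)
  · rw [sub_le_iff_le_add]
    refine ciSup_le fun j => ?_
    by_cases hj : big j
    · have h1 := le_ciSup bL (H j)
      have h2 : σ j * x j = sketch H σ x (H j) -
          sketch H σ (fun j => if big j then 0 else x j) (H j) := by
        rw [hsplit (H j), hone j hj]; ring
      have h3 : |x j| = |σ j * x j| := by rw [abs_mul, hσa, one_mul]
      rw [h3, h2]
      have := abs_sub (sketch H σ x (H j)) (sketch H σ (fun j => if big j then 0 else x j) (H j))
      linarith [hlight (H j)]
    · have := (abs_nonneg _).trans (le_ciSup bL (⟨0, ht⟩ : Fin t))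
      linarith [hsmall j hj]

/-- Let `x ∈ ℝ^d` be fixed, `α ∈ (0, 1/√2]`, `δ ∈ (0,1)`, and let `L` be the random
sketch map defined from `h` and `s`.  If `t ≥ 1/(2α⁴δ)` then with probability at least
`1 − 3δ`: (1) `|‖Lx‖_∞ − ‖x‖_∞| ≤ (2√α/δ^{1/4})·‖x‖₂`, and
(2) `‖Lx‖₂² ≤ (1 + 2α²)·‖x‖₂²`. -/
theorem sketch_linf_l2_preserved {Ω : Type*} [MeasurableSpace Ω] (μ : Measure Ω)
    [IsProbabilityMeasure μ] {d t : ℕ} (hd : 0 < d) (ht : 0 < t)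
    (h : Ω → Fin d → Fin t) (s : Ω → Fin d → ℝ)
    (hmh : Measurable h) (hms : Measurable s)
    (hph : PairwiseUniform μ h) (hfs : FourWiseSigns μ s)
    (hhs : IndepFun h s μ)
    (x : Fin d → ℝ) (α δ : ℝ) (hα0 : 0 < α) (hα1 : α ≤ 1 / Real.sqrt 2)
    (hδ0 : 0 < δ) (hδ1 : δ < 1)
    (htα : 1 / (2 * α ^ 4 * δ) ≤ (t : ℝ)) :
    1 - ENNReal.ofReal (3 * δ) ≤
      μ {ω | abs ((⨆ i, abs (sketch (h ω) (s ω) x i)) - ⨆ j, abs (x j))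
                ≤ 2 * Real.sqrt α / δ ^ ((1 : ℝ) / 4) * Real.sqrt (∑ j, x j ^ 2) ∧
             ∑ i, (sketch (h ω) (s ω) x i) ^ 2 ≤ (1 + 2 * α ^ 2) * ∑ j, x j ^ 2} := by
  classical
  set N : ℝ := ∑ j, x j ^ 2 with hN
  have hN0 : 0 ≤ N := Finset.sum_nonneg fun j _ => sq_nonneg _
  set B : ℝ := 2 * Real.sqrt α / δ ^ ((1 : ℝ) / 4) * Real.sqrt N with hBdef
  have hB0 : 0 ≤ B := by positivity
  -- For `x = 0` the thresholds in Markov's inequality degenerate, but everything vanishes.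
  rcases hN0.eq_or_lt with hNz | hNpos
  · have hx : ∀ j, x j = 0 := by
      intro j
      have := (Finset.sum_eq_zero_iff_of_nonneg fun j _ => sq_nonneg (x j)).1 hNz.symm j
        (Finset.mem_univ j)
      exact pow_eq_zero_iff (two_ne_zero) |>.1 this
    have huniv : {ω | abs ((⨆ i, abs (sketch (h ω) (s ω) x i)) - ⨆ j, abs (x j)) ≤ B ∧
        ∑ i, (sketch (h ω) (s ω) x i) ^ 2 ≤ (1 + 2 * α ^ 2) * N} = Set.univ := by
      refine Set.eq_univ_of_forall fun ω => ?_
      simp [sketch, hx, hB0, ← hNz]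
    rw [huniv, measure_univ]
    exact tsub_le_self
  have ht' : (0 : ℝ) < t := by exact_mod_cast ht
  have hα2 : α ^ 2 ≤ 1 / 2 := by
    calc α ^ 2 ≤ (1 / Real.sqrt 2) ^ 2 := by gcongr
      _ = 1 / 2 := by rw [div_pow, Real.sq_sqrt (by norm_num)]; norm_num
  have hinv : 1 / (t : ℝ) ≤ 2 * α ^ 4 * δ := by
    rw [div_le_iff₀ (by positivity)] at htα
    rw [div_le_iff₀ ht']
    linarith
  have hNt : N ^ 2 / t ≤ 2 * α ^ 4 * δ * N ^ 2 := by
    have := mul_le_mul_of_nonneg_right hinv (sq_nonneg N)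
    calc N ^ 2 / t = 1 / t * N ^ 2 := by ring
      _ ≤ _ := this
  have hB4 : B ^ 4 = 16 * α ^ 2 / δ * N ^ 2 := by
    have e1 : (δ ^ ((1 : ℝ) / 4)) ^ 4 = δ := by
      rw [← Real.rpow_natCast, ← Real.rpow_mul hδ0.le]; norm_num
    have e2 : Real.sqrt α ^ 4 = α ^ 2 := by
      rw [show 4 = 2 * 2 from rfl, pow_mul, Real.sq_sqrt hα0.le]
    have e3 : Real.sqrt N ^ 4 = N ^ 2 := by
      rw [show 4 = 2 * 2 from rfl, pow_mul, Real.sq_sqrt hN0]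
    rw [hBdef, mul_pow, div_pow, mul_pow, e1, e2, e3]
    norm_num
  let big : Fin d → Prop := fun j => α ^ 2 * N < x j ^ 2
  let y : Fin d → ℝ := fun j => if big j then 0 else x j
  let z : Fin d → ℝ := fun j => if big j then x j else 0
  have hy2 : ∑ j, y j ^ 2 ≤ N := Finset.sum_le_sum fun j _ => by
    simp only [y]; split_ifs
    · simpa using sq_nonneg (x j)
    · exact le_rfl
  have hz2 : ∑ j, z j ^ 2 ≤ N := Finset.sum_le_sum fun j _ => by
    simp only [z]; split_ifs
    · exact le_rfl
    · simpa using sq_nonneg (x j)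
  have hy20 : 0 ≤ ∑ j, y j ^ 2 := Finset.sum_nonneg fun j _ => sq_nonneg _
  have hz20 : 0 ≤ ∑ j, z j ^ 2 := Finset.sum_nonneg fun j _ => sq_nonneg _
  have hy4 : ∑ j, y j ^ 4 ≤ α ^ 2 * N ^ 2 := by
    calc ∑ j, y j ^ 4 ≤ ∑ j, α ^ 2 * N * x j ^ 2 := Finset.sum_le_sum fun j _ => by
          simp only [y]
          split_ifs with hb
          · simp; positivity
          · have := mul_le_mul_of_nonneg_right (not_lt.1 hb) (sq_nonneg (x j))
            calc x j ^ 4 = x j ^ 2 * x j ^ 2 := by ring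
              _ ≤ _ := this
      _ = α ^ 2 * N ^ 2 := by rw [← Finset.mul_sum, ← hN]; ring
  -- Bad event 1: the squared norm deviates too much.
  obtain ⟨hZi, hZ⟩ := integral_norm_sq_dev ht hmh hms hph hfs hhs x
  have hP1 := markov_le (c := 4 * α ^ 4 * N ^ 2) hZi (fun ω => sq_nonneg _) (by positivity) hδ0.le
    (hZ.trans (by rw [← hN]; linarith))
  -- Bad event 2: two large coordinates collide, which forces collision energy `2 α⁴ N²`.
  have hP2 := markov_le (c := 2 * α ^ 4 * N ^ 2) (f := fun ω => collision z (h ω)) (μ := μ)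
    ((Integrable.of_finite (f := collision z) (μ := μ.map h)).comp_measurable hmh)
    (fun ω => collision_nonneg _ _) (by positivity) hδ0.le
    ((integral_collision_le ht hmh hph z).trans (by
      have : (∑ j, z j ^ 2) ^ 2 / t ≤ N ^ 2 / t := by gcongr
      linarith))
  -- Bad event 3: some bucket receives a large contribution from the small coordinates.
  obtain ⟨Q, hQi, hQle, hQ⟩ := integral_fourth ht hmh hms hph hfs hhs y
  have hQ0 : ∀ ω, 0 ≤ Q ω := fun ω => le_trans (by positivity) (hQle ω ⟨0, ht⟩)
  have hP3 := markov_le (c := B ^ 4) hQi hQ0 (by rw [hB4]; positivity) hδ0.le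
    (hQ.trans (by
      have h1 : (∑ j, y j ^ 2) ^ 2 / t ≤ N ^ 2 / t := by gcongr
      have h2 : B ^ 4 * δ = 16 * (α ^ 2 * N ^ 2) := by rw [hB4]; field_simp
      have h3 : α ^ 4 * δ * N ^ 2 ≤ 1 / 2 * (α ^ 2 * N ^ 2) := by
        calc α ^ 4 * δ * N ^ 2 = (α ^ 2 * δ) * (α ^ 2 * N ^ 2) := by ring
          _ ≤ 1 / 2 * (α ^ 2 * N ^ 2) := by
            gcongr
            nlinarith [sq_nonneg α]
      have h4 : 0 ≤ α ^ 2 * N ^ 2 := by positivity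
      rw [h2]
      linarith))
  rw [tsub_le_iff_right]
  set G := {ω | abs ((⨆ i, abs (sketch (h ω) (s ω) x i)) - ⨆ j, abs (x j)) ≤ B ∧
        ∑ i, (sketch (h ω) (s ω) x i) ^ 2 ≤ (1 + 2 * α ^ 2) * N} with hG
  set E1 := {ω | 4 * α ^ 4 * N ^ 2 ≤
    (∑ i, sketch (h ω) (s ω) x i ^ 2 - ∑ j, x j ^ 2) ^ 2} with hE1
  set E2 := {ω | 2 * α ^ 4 * N ^ 2 ≤ collision z (h ω)} with hE2
  set E3 := {ω | B ^ 4 ≤ Q ω} with hE3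
  have hcover : Set.univ ⊆ G ∪ (E1 ∪ E2 ∪ E3) := by
    intro ω _
    by_contra hω
    simp only [Set.mem_union, not_or] at hω
    obtain ⟨hnG, ⟨hn1, hn2⟩, hn3⟩ := hω
    apply hnG
    simp only [hE1, hE2, hE3, Set.mem_ofPred_eq, not_le] at hn1 hn2 hn3
    refine ⟨sup_dev_le hd ht (h ω) (s ω) (hfs.1 ω) x big B ?_ ?_ ?_, ?_⟩
    · intro j hj
      have hj : x j ^ 2 ≤ α ^ 2 * N := not_lt.1 hj
      refine le_of_pow_le_pow_left₀ (n := 4) (by norm_num) hB0 ?_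
      calc |x j| ^ 4 = (x j ^ 2) ^ 2 := by rw [← sq_abs (x j)]; ring
        _ ≤ (α ^ 2 * N) ^ 2 := by gcongr
        _ = α ^ 2 * (α ^ 2 * N ^ 2) := by ring
        _ ≤ 16 / δ * (α ^ 2 * N ^ 2) := by
          gcongr
          rw [le_div_iff₀ hδ0]
          nlinarith
        _ = B ^ 4 := by rw [hB4]; ring
    · intro j k hj hk hjk
      by_contra hne
      refine absurd hn2 (not_lt.2 ?_)
      have hterm : ∀ a b, big a → big b → α ^ 4 * N ^ 2 ≤ z a ^ 2 * z b ^ 2 := by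
        intro a b ha hb
        simp only [z, if_pos ha, if_pos hb]
        have ha' : α ^ 2 * N < x a ^ 2 := ha
        have hb' : α ^ 2 * N < x b ^ 2 := hb
        calc α ^ 4 * N ^ 2 = (α ^ 2 * N) * (α ^ 2 * N) := by ring
          _ ≤ _ := by gcongr
      have hnn : ∀ a b, 0 ≤ (if a ≠ b ∧ h ω a = h ω b then z a ^ 2 * z b ^ 2 else 0) := by
        intro a b; split_ifs <;> positivity
      -- The two ordered pairs `(j, k)` and `(k, j)` each contribute at least `α⁴ N²`.
      have hin : ∀ a b, (if a ≠ b ∧ h ω a = h ω b then z a ^ 2 * z b ^ 2 else 0) ≤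
          ∑ b, if a ≠ b ∧ h ω a = h ω b then z a ^ 2 * z b ^ 2 else 0 := fun a b =>
        Finset.single_le_sum
          (f := fun b => if a ≠ b ∧ h ω a = h ω b then z a ^ 2 * z b ^ 2 else 0)
          (fun b _ => hnn a b) (Finset.mem_univ b)
      have hout := Finset.sum_le_sum_of_subset_of_nonneg
        (f := fun a => ∑ b, if a ≠ b ∧ h ω a = h ω b then z a ^ 2 * z b ^ 2 else 0)
        (Finset.subset_univ ({j, k} : Finset (Fin d)))
        (fun a _ _ => Finset.sum_nonneg fun b _ => hnn a b)
      rw [Finset.sum_pair hne] at hout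
      have e1 := hin j k
      have e2 := hin k j
      rw [if_pos ⟨hne, hjk⟩] at e1
      rw [if_pos ⟨Ne.symm hne, hjk.symm⟩] at e2
      have f1 := hterm j k hj hk
      have f2 := hterm k j hk hj
      unfold collision
      linarith
    · intro i
      refine le_of_pow_le_pow_left₀ (n := 4) (by norm_num) hB0 ?_
      calc |sketch (h ω) (s ω) y i| ^ 4 = sketch (h ω) (s ω) y i ^ 4 :=
            (show Even 4 by decide).pow_abs _
        _ ≤ B ^ 4 := (hQle ω i).trans hn3.le
    · have : (∑ i, sketch (h ω) (s ω) x i ^ 2 - N) ^ 2 < (2 * α ^ 2 * N) ^ 2 := by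
        calc _ < 4 * α ^ 4 * N ^ 2 := hn1
          _ = _ := by ring
      have := lt_of_pow_lt_pow_left₀ 2 (by positivity) this
      linarith
  calc (1 : ℝ≥0∞) = μ Set.univ := measure_univ.symm
    _ ≤ μ (G ∪ (E1 ∪ E2 ∪ E3)) := measure_mono hcover
    _ ≤ μ G + (μ E1 + μ E2 + μ E3) := (measure_union_le _ _).trans (by
        gcongr
        refine (measure_union_le _ _).trans ?_
        gcongr
        exact measure_union_le _ _)
    _ ≤ μ G + (ENNReal.ofReal δ + ENNReal.ofReal δ + ENNReal.ofReal δ) := by gcongr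
    _ = μ G + ENNReal.ofReal (3 * δ) := by
        rw [← ENNReal.ofReal_add hδ0.le hδ0.le, ← ENNReal.ofReal_add (by positivity) hδ0.le]
        congr 2
        ring
end

section
/- Let b ≥ 2 be a power of 2, let n ≥ 1 and k ≥ 0 be integers, let x ∈ {0,1}^n, and let h₀, …, h_{k−1} be vectors of b functions from {0,1}^n to {0,1}^n. Fix ℓ ∈ {0, …, b^k − 1} with base-b digits ℓ_{k−1} ⋯ ℓ₀, and define h'₀, …, h'_{k−1} by (h'_i)^{(j)} := h_i^{(j ⊕ ℓ_i)} for all i ∈ {0, …, k−1} and j ∈ {0, …, b−1}, where ⊕ denotes bitwise XOR on {0, …, b−1}. Then for every j ∈ {0, …, b^k − 1}, the j-th block of G_k(x, h'₀, …, h'_{k−1}) equals the (j ⊕ ℓ)-th block of G_k(x, h₀, …, h_{k−1}), where j ⊕ ℓ denotes bitwise XOR of j and ℓ; that is, G_k(x, h'₀, …, h'_{k−1}) = G_k(x, h₀, …, h_{k−1})^{⊕ℓ}. -/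
/-!
The `j`-th block of `G_k` is obtained by walking down a `b`-ary tree along the base-`b` digits of
`j`, most significant first, using `h_i^{(d)}` when the `i`-th digit is `d`.  When `b = 2^m`, the
base-`b` digits are disjoint groups of `m` bits, so the XOR of two numbers acts digit by digit
(`xor_digit`).  Hence XOR-ing the superscripts of `h_i` with `ℓ_i` amounts to XOR-ing the index
with `ℓ`.  The induction on `k` (`Gk_xor_aux`) is carried out for arbitrary `j` and `ℓ`, since
`Gk` only sees its index modulo `b^k` (`Gk_mod`) and only the lowest `k` digits of `ℓ` occur.
-/

open scoped BigOperators

/-- Bitwise XOR on `{0, …, b−1}` (for `b` a power of two, the reduction mod `b` is the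
identity on the XOR of two values below `b`). -/
def xorFin {b : ℕ} (hb : 0 < b) (j : Fin b) (a : ℕ) : Fin b :=
  ⟨((j : ℕ) ^^^ a) % b, Nat.mod_lt _ hb⟩

/-- For `b = 2^m`, the `k`-th base-`b` digit of an XOR is the XOR of the `k`-th digits. -/
lemma xor_digit (m k j l : ℕ) :
    (j ^^^ l) / (2 ^ m) ^ k % 2 ^ m
      = ((j / (2 ^ m) ^ k % 2 ^ m) ^^^ (l / (2 ^ m) ^ k % 2 ^ m)) % 2 ^ m := by
  rw [← pow_mul]
  apply Nat.eq_of_testBit_eq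
  intro i
  by_cases hi : i < m <;> simp [Nat.testBit_mod_two_pow, Nat.testBit_div_two_pow, hi]

lemma Gk_mod {n b : ℕ} (hb : 0 < b) (k : ℕ)
    (h : Fin k → Fin b → (Fin n → Bool) → (Fin n → Bool)) (x : Fin n → Bool) (j : ℕ) :
    Gk hb k h x (j % b ^ k) = Gk hb k h x j := by
  cases k with
  | zero => rfl
  | succ k =>
    have h1 : j % b ^ (k + 1) / b ^ k % b = j / b ^ k % b := by
      rw [pow_succ, Nat.mod_mul_right_div_self, Nat.mod_mod]
    have h2 : j % b ^ (k + 1) % b ^ k = j % b ^ k :=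
      Nat.mod_mod_of_dvd _ (pow_dvd_pow b (Nat.le_succ k))
    simp only [Gk, h1, h2]

/-- The symmetry without any bound on `j` and `ℓ`; dropping the bounds lets the induction
hypothesis be applied to the same `ℓ`. -/
lemma Gk_xor_aux {n : ℕ} (m : ℕ) (hb : 0 < 2 ^ m) (l : ℕ) (k : ℕ)
    (h : Fin k → Fin (2 ^ m) → (Fin n → Bool) → (Fin n → Bool)) (x : Fin n → Bool) (j : ℕ) :
    Gk hb k (fun i jj => h i (xorFin hb jj (l / (2 ^ m) ^ (i : ℕ) % 2 ^ m))) x j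
      = Gk hb k h x (j ^^^ l) := by
  induction k generalizing x j with
  | zero => rfl
  | succ k ih =>
    simp only [Gk, Gk_mod, xorFin, Fin.val_last, xor_digit m k j l]
    exact ih (fun i => h i.castSucc) _ j

/-- Let `b = 2^m ≥ 2` be a power of two and fix `ℓ ∈ {0, …, b^k − 1}` with base-`b`
digits `ℓ_i = ℓ / b^i % b`.  Define `h'_i^{(j)} := h_i^{(j ⊕ ℓ_i)}`.  Then for every
`j ∈ {0, …, b^k − 1}`, the `j`-th block of `G_k(x, h'₀, …, h'_{k−1})` equals the
`(j ⊕ ℓ)`-th block of `G_k(x, h₀, …, h_{k−1})`;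
that is, `G_k(x, h'₀, …, h'_{k−1}) = G_k(x, h₀, …, h_{k−1})^{⊕ℓ}`. -/
theorem Gk_xor_symmetry {n b : ℕ} (hn : 1 ≤ n) (m : ℕ) (hb2 : 2 ≤ b) (hbm : b = 2 ^ m)
    (hb : 0 < b) (k : ℕ)
    (h : Fin k → Fin b → (Fin n → Bool) → (Fin n → Bool)) (x : Fin n → Bool)
    (ℓ : ℕ) (hℓ : ℓ < b ^ k) :
    ∀ j < b ^ k,
      Gk hb k (fun i jj => h i (xorFin hb jj (ℓ / b ^ (i : ℕ) % b))) x j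
        = Gk hb k h x (j ^^^ ℓ) := by
  subst hbm
  exact fun j _ => Gk_xor_aux m hb ℓ k h x j
end

section
/- Let b ≥ 2 be a power of 2, let n ≥ 1 and k ≥ 0 be integers. Suppose the b·k component functions h_i^{(j)} : {0,1}^n → {0,1}^n (for i ∈ {0,…,k−1}, j ∈ {0,…,b−1}) are random functions that are mutually independent and, for each fixed i, the b functions h_i^{(0)}, …, h_i^{(b−1)} are identically distributed; let x be a random element of {0,1}^n independent of all the h_i^{(j)}. Let γ = G_k(x, h₀, …, h_{k−1}). Then for every ℓ ∈ {0, …, b^k − 1}, the random string γ^{⊕ℓ} has the same distribution as γ. -/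
/-!
Write `ℓ = ∑ i, ℓ_i b ^ i` in base `b = 2 ^ m`. Because `b` is a power of two, bitwise XOR acts
separately on the base-`b` digits, and the `i`-th digit of a block index `j` selects which of the
functions `h_i^{(0)}, …, h_i^{(b-1)}` is applied on the way to block `j`. Hence reading block
`j ⊕ ℓ` of `G_k(x, h)` is the same as reading block `j` of `G_k(x, h')`, where
`h'_i^{(c)} = h_i^{(c ⊕ ℓ_i)}` (`Gk_xor`). For each `i` the map `h ↦ h'` permutes the i.i.d. family
`h_i^{(0)}, …, h_i^{(b-1)}`, so it preserves the product measure (`measurePreserving_comp_perm`),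
and the two strings have the same law.
-/

open scoped BigOperators

/-- The map `c ↦ c ⊕ (d mod b)` on base-`b` digits, for `b = 2 ^ m`. The reduction mod `b` is
applied to the whole XOR, so `d` may be any natural number. -/
def xorPerm {b m : ℕ} (hbm : b = 2 ^ m) (hb : 0 < b) (d : ℕ) : Equiv.Perm (Fin b) :=
  Function.Involutive.toPerm (fun c => ⟨((c : ℕ) ^^^ d) % b, Nat.mod_lt _ hb⟩) (by
    intro c
    apply Fin.ext
    have hc : (c : ℕ) % b = c := Nat.mod_eq_of_lt c.2
    subst hbm
    simp only [Nat.xor_mod_two_pow, Nat.mod_mod, Nat.xor_assoc, Nat.xor_self, Nat.xor_zero, hc])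

/-- Block `j ⊕ ℓ` of `G_k` is block `j` after permuting each level of functions by the
corresponding base-`b` digit of `ℓ`. -/
lemma Gk_xor {n b m : ℕ} (hbm : b = 2 ^ m) (hb : 0 < b) (k : ℕ)
    (h : Fin k → Fin b → (Fin n → Bool) → (Fin n → Bool)) (x : Fin n → Bool) (j ℓ : ℕ) :
    Gk hb k h x (j ^^^ ℓ) = Gk hb k (fun i c => h i (xorPerm hbm hb (ℓ / b ^ (i : ℕ)) c)) x j := by
  induction k generalizing x j ℓ with
  | zero => rfl
  | succ k ih =>
    have hbk : b ^ k = 2 ^ (m * k) := by rw [hbm, pow_mul]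
    have hmod : (j ^^^ ℓ) % b ^ k = (j % b ^ k) ^^^ (ℓ % b ^ k) := by
      rw [hbk, Nat.xor_mod_two_pow]
    have hdig : (⟨(j ^^^ ℓ) / b ^ k % b, Nat.mod_lt _ hb⟩ : Fin b) =
        xorPerm hbm hb (ℓ / b ^ k) ⟨j / b ^ k % b, Nat.mod_lt _ hb⟩ := by
      apply Fin.ext
      change (j ^^^ ℓ) / b ^ k % b = (j / b ^ k % b ^^^ ℓ / b ^ k) % b
      rw [hbk, hbm, Nat.xor_div_two_pow, Nat.xor_mod_two_pow, Nat.xor_mod_two_pow, Nat.mod_mod]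
    -- The low `k` digits of `ℓ` are unchanged by reduction mod `b ^ k`.
    have hlow : ∀ i : Fin k, xorPerm hbm hb (ℓ % b ^ k / b ^ (i : ℕ)) =
        xorPerm hbm hb (ℓ / b ^ (i : ℕ)) := by
      intro i
      ext c
      change ((c : ℕ) ^^^ (ℓ % b ^ k / b ^ (i : ℕ))) % b = ((c : ℕ) ^^^ (ℓ / b ^ (i : ℕ))) % b
      have hd : ℓ % b ^ k / b ^ (i : ℕ) % b = ℓ / b ^ (i : ℕ) % b := by
        obtain ⟨r, hr⟩ := Nat.exists_eq_add_of_lt i.2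
        have hk : b ^ k = b ^ (i : ℕ) * (b * b ^ r) := by
          conv_lhs => rw [hr]
          ring
        rw [hk, Nat.mod_mul_right_div_self, Nat.mod_mul_right_mod]
      subst hbm
      rw [Nat.xor_mod_two_pow, hd, ← Nat.xor_mod_two_pow]
    rw [Gk, Gk, hmod, hdig, ih]
    simp only [hlow, Fin.val_castSucc, Fin.val_last]

open MeasureTheory

/-- Permuting an i.i.d. family does not change its joint law. -/
lemma measurePreserving_comp_perm {ι α : Type*} [Fintype ι] [MeasurableSpace α]
    (μ : Measure α) [SigmaFinite μ] (e : Equiv.Perm ι) :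
    MeasurePreserving (fun f : ι → α => fun c => f (e c))
      (Measure.pi fun _ => μ) (Measure.pi fun _ => μ) := by
  have h := measurePreserving_piCongrLeft (fun _ : ι => μ) e.symm
  convert h using 1
  ext f c
  obtain ⟨d, rfl⟩ := e.symm.surjective c
  rw [Equiv.apply_symm_apply]
  exact (Equiv.piCongrLeft_apply_apply (fun _ : ι => α) e.symm f d).symm

/-- Let `b = 2^m ≥ 2` be a power of two.  Suppose the `b·k` component functions
`h_i^{(j)} : {0,1}^n → {0,1}^n` are mutually independent random functions such that for
each fixed `i` the functions `h_i^{(0)}, …, h_i^{(b−1)}` are identically distributed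
(with common distribution `ν i`), and let `x` be a random element of `{0,1}^n`
(distribution `ξ`) independent of all the `h_i^{(j)}`; i.e., the joint sample is drawn
from the product measure `(Π_i Π_j ν i) × ξ`.  Let `γ = G_k(x, h₀, …, h_{k−1})`.  Then
for every `ℓ ∈ {0, …, b^k − 1}`, the random string `γ^{⊕ℓ}` (whose `j`-th block is the
`(j ⊕ ℓ)`-th block of `γ`) has the same distribution as `γ`. -/
theorem Gk_xor_distribution_invariant {n b : ℕ} (hn : 1 ≤ n) (m : ℕ)
    (hb2 : 2 ≤ b) (hbm : b = 2 ^ m) (hb : 0 < b) (k : ℕ)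
    (ν : Fin k → Measure ((Fin n → Bool) → (Fin n → Bool)))
    [∀ i, IsProbabilityMeasure (ν i)]
    (ξ : Measure (Fin n → Bool)) [IsProbabilityMeasure ξ]
    (ℓ : ℕ) (hℓ : ℓ < b ^ k) :
    Measure.map
        (fun ω : (∀ _i : Fin k, ∀ _j : Fin b, (Fin n → Bool) → (Fin n → Bool)) ×
            (Fin n → Bool) =>
          fun j : Fin (b ^ k) => Gk hb k ω.1 ω.2 ((j : ℕ) ^^^ ℓ))
        ((Measure.pi fun i => Measure.pi fun _j : Fin b => ν i).prod ξ)
      =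
      Measure.map
        (fun ω : (∀ _i : Fin k, ∀ _j : Fin b, (Fin n → Bool) → (Fin n → Bool)) ×
            (Fin n → Bool) =>
          fun j : Fin (b ^ k) => Gk hb k ω.1 ω.2 (j : ℕ))
        ((Measure.pi fun i => Measure.pi fun _j : Fin b => ν i).prod ξ) := by
  have hσ : MeasurePreserving
      (Prod.map (fun (h : Fin k → Fin b → (Fin n → Bool) → (Fin n → Bool)) i c =>
        h i (xorPerm hbm hb (ℓ / b ^ (i : ℕ)) c)) id)
      ((Measure.pi fun i => Measure.pi fun _j : Fin b => ν i).prod ξ)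
      ((Measure.pi fun i => Measure.pi fun _j : Fin b => ν i).prod ξ) :=
    (measurePreserving_pi _ _ fun i => measurePreserving_comp_perm (ν i)
      (xorPerm hbm hb (ℓ / b ^ (i : ℕ)))).prod (MeasurePreserving.id ξ)
  conv_rhs => rw [← hσ.map_eq]
  rw [Measure.map_map (Measurable.of_discrete) hσ.measurable]
  congr 1
  funext ω j
  exact Gk_xor hbm hb k ω.1 ω.2 j ℓ
end
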